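/- arXiv:2107.14672 — 2 statements merged into one kernel-verified Lean document; each statement's English description precedes it below -/
import Mathlib

section
/- Let u < v and let ỹ^u_{t,k} := max_{t' ∈ [t,u]} ŷ^{t'}_{t',k}. Then Σ_{k=1}^m Σ_{t=1}^u ỹ^u_{t,k} · C_{t,k}(X̂^u) ≤ Σ_{k=1}^m Σ_{t=1}^u ỹ^u_{t,k} · C_{t,k}(X̂^v). -/
open Finset

/-- A lane-representation schedule `y` (where `y t k ∈ {0,…,d}` is the server type
serving lane `k` at time `t`, and `0` means no active server) is feasible for the
truncated instance with horizon `T`, `d` server types, `m j` servers of type `j`,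
`mtot` lanes and job volumes `lam`:
* all lanes are empty at time `0` and after time `T`, and beyond lane `mtot`;
* demand: lane `k` has an active server whenever `k ≤ lam t`;
* server types are in `{0,…,d}` and sorted in descending order of lanes;
* at most `m j` lanes use server type `j` at any time. -/
def LaneFeasible (T d mtot : ℕ) (m lam : ℕ → ℕ) (y : ℕ → ℕ → ℕ) : Prop :=
  (∀ k, y 0 k = 0) ∧
  (∀ t k, T < t → y t k = 0) ∧
  (∀ t k, mtot < k → y t k = 0) ∧
  (∀ t ∈ Finset.Icc 1 T, ∀ k ∈ Finset.Icc 1 mtot, k ≤ lam t → 1 ≤ y t k) ∧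
  (∀ t k, y t k ≤ d) ∧
  (∀ t k k', k ≤ k' → y t k' ≤ y t k) ∧
  (∀ t j, 1 ≤ j →
    ((Finset.Icc 1 mtot).filter (fun k => y t k = j)).card ≤ m j)

/-- The cost of lane-schedule `y` in lane `k` at time slot `t`: operating cost of the
server type used there, plus switching cost if the server type changed. -/
noncomputable def laneCostTK (β l : ℕ → ℝ) (y : ℕ → ℕ → ℕ) (t k : ℕ) : ℝ :=
  if y t k = 0 then 0
  else if y (t - 1) k = y t k then l (y t k)
  else l (y t k) + β (y t k)

/-- Total cost of a lane-representation schedule over horizon `T` and `mtot` lanes. -/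
noncomputable def laneCost (T mtot : ℕ) (β l : ℕ → ℝ) (y : ℕ → ℕ → ℕ) : ℝ :=
  ∑ t ∈ Finset.Icc 1 T, ∑ k ∈ Finset.Icc 1 mtot, laneCostTK β l y t k

/-- An optimal lane-representation schedule: feasible of minimum cost. -/
def LaneOptimal (T d mtot : ℕ) (m lam : ℕ → ℕ) (β l : ℕ → ℝ) (y : ℕ → ℕ → ℕ) : Prop :=
  LaneFeasible T d mtot m lam y ∧
  ∀ y', LaneFeasible T d mtot m lam y' →
    laneCost T mtot β l y ≤ laneCost T mtot β l y'

/-- `ytilde Yhat u t k = max_{t'' ∈ [t,u]} ŷ^{t''}_{t'',k}`: the largest server type used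
in lane `k` at the final time slot of any of the schedules `X̂^{t''}`, `t'' ∈ [t,u]`. -/
def ytilde (Yhat : ℕ → ℕ → ℕ → ℕ) (u t k : ℕ) : ℕ :=
  (Finset.Icc t u).sup (fun t'' => Yhat t'' t'' k)

/-! Splitting the weights into nonnegative multiples of indicators, it suffices to compare the
costs of the optimal schedule `b` and of a dominating schedule `a` over a lower set `R` of
slot-lane pairs. Follow `a` on `R` and `b` off `R`, and then never downgrade a lane while it stays
active. The resulting schedule is feasible; in every slot and lane it costs at most as much as `a`
on `R` and at most as much as `b` off `R`: if it inherits a larger server type than the schedule it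
follows, it pays no switching cost and a smaller operating cost, and otherwise that schedule has to
switch as well, because it was not on a larger type before. Optimality of `b` now gives the
comparison on `R`. -/

section WeightedSum

variable {α R M : Type*} [Ring R] [LinearOrder R] [IsOrderedAddMonoid R] [AddCommMonoid M]
  [Module R M] {s : Finset α} {w : α → R}

theorem sum_smul_eq_sum_max_sub_smul_add {c : R} (hw0 : ∀ x ∈ s, 0 ≤ w x) (hc : 0 ≤ c)
    (hcw : ∀ x ∈ s, 0 < w x → c ≤ w x) (f : α → M) :
    ∑ x ∈ s, w x • f x =
      ∑ x ∈ s, max (w x - c) 0 • f x + c • ∑ x ∈ s, {x | 0 < w x}.indicator f x := by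
  rw [smul_sum, ← sum_add_distrib]
  refine sum_congr rfl fun x hx => ?_
  obtain hwx | hwx := (hw0 x hx).eq_or_lt
  · simp [← hwx, hc]
  · have hxS : x ∈ {x | 0 < w x} := hwx
    rw [Set.indicator_of_mem hxS, max_eq_left (sub_nonneg.2 (hcw x hx hwx)), ← add_smul,
      sub_add_cancel]

theorem sum_smul_le_sum_smul_of_antitone [Preorder α] [PartialOrder M] [IsOrderedAddMonoid M]
    [PosSMulMono R M] {f g : α → M} (hw : Antitone w) (hw0 : ∀ x ∈ s, 0 ≤ w x)
    (hfg : ∀ L : Set α, IsLowerSet L → ∑ x ∈ s, L.indicator f x ≤ ∑ x ∈ s, L.indicator g x) :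
    ∑ x ∈ s, w x • f x ≤ ∑ x ∈ s, w x • g x := by
  induction hn : #{x ∈ s | 0 < w x} using Nat.strong_induction_on generalizing w with
  | _ n ih =>
  obtain hs | hs := {x ∈ s | 0 < w x}.eq_empty_or_nonempty
  · have hzero : ∀ x ∈ s, w x = 0 := fun x hx =>
      (not_lt.1 (filter_eq_empty_iff.1 hs hx)).antisymm (hw0 x hx)
    have hsum (h : α → M) : ∑ x ∈ s, w x • h x = 0 :=
      sum_eq_zero fun x hx => by rw [hzero x hx, zero_smul]
    rw [hsum, hsum]
  -- Peel off the smallest positive weight `w x₀` from the whole support of `w`.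
  obtain ⟨x₀, hx₀, hmin⟩ := exists_min_image _ w hs
  have hpos : 0 < w x₀ := (mem_filter.1 hx₀).2
  let w' : α → R := fun x => max (w x - w x₀) 0
  have hsplit (h : α → M) : ∑ x ∈ s, w x • h x =
      ∑ x ∈ s, w' x • h x + w x₀ • ∑ x ∈ s, {x | 0 < w x}.indicator h x :=
    sum_smul_eq_sum_max_sub_smul_add hw0 hpos.le
      (fun x hx hwx => hmin x (mem_filter.2 ⟨hx, hwx⟩)) h
  have hw' : Antitone w' := fun x y hxy => max_le_max_right 0 (sub_le_sub_right (hw hxy) _)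
  have hcard : #{x ∈ s | 0 < w' x} < n := by
    rw [← hn]
    refine card_lt_card (ssubset_iff_of_subset ?_ |>.2 ⟨x₀, hx₀, by simp [w']⟩)
    refine monotone_filter_right s fun x _ hx => ?_
    have hlt : w x₀ < w x := by simpa [w'] using hx
    exact hpos.trans hlt
  rw [hsplit, hsplit]
  have hsupp : IsLowerSet {x | 0 < w x} := fun x y hyx hx => lt_of_lt_of_le hx (hw hyx)
  exact add_le_add (ih _ hcard hw' (fun _ _ => le_max_right _ _) rfl)
    (smul_le_smul_of_nonneg_left (hfg _ hsupp) hpos.le)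

end WeightedSum

section Piecewise

variable {ι β : Type*} {p q : ι → β} {S : Set ι} [∀ i, Decidable (i ∈ S)]

theorem antitone_piecewise_of_isLowerSet [Preorder ι] [Preorder β] (hp : Antitone p)
    (hq : Antitone q) (hqp : q ≤ p) (hS : IsLowerSet S) : Antitone (S.piecewise p q) := by
  intro i i' hi
  by_cases hi'S : i' ∈ S
  · simpa [hi'S, hS hi hi'S] using hp hi
  · rw [Set.piecewise_eq_of_notMem _ _ _ hi'S]
    exact Set.le_piecewise (fun _ _ => (hqp i').trans (hp hi)) (fun _ _ => hq hi) i

theorem piecewise_fiber_imp_or [LinearOrder ι] [PartialOrder β] (hp : Antitone p) (hqp : q ≤ p)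
    (hS : IsLowerSet S) (j : β) :
    (∀ i, S.piecewise p q i = j → p i = j) ∨ (∀ i, S.piecewise p q i = j → q i = j) := by
  by_cases hj : ∃ k ∈ S, p k = j
  · obtain ⟨k, hkS, rfl⟩ := hj
    refine Or.inl fun i hi => ?_
    by_cases hiS : i ∈ S
    · simpa [hiS] using hi
    · have hki : k ≤ i := le_of_not_ge fun hik => hiS (hS hik hkS)
      have hqi : q i = p k := by simpa [hiS] using hi
      exact (hp hki).antisymm (hqi ▸ hqp i)
  · refine Or.inr fun i hi => ?_
    by_cases hiS : i ∈ S
    · exact absurd ⟨i, hiS, by simpa [hiS] using hi⟩ hj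
    · simpa [hiS] using hi

end Piecewise

section Carry

variable {ι : Type*} {p q : ι → ℕ}

/-- The configuration that serves the lanes active in `p` without ever downgrading a lane from its
server type in the preceding configuration `q`. -/
def carry (q p : ι → ℕ) (i : ι) : ℕ :=
  if p i = 0 then 0 else max (q i) (p i)

theorem le_carry (q p : ι → ℕ) : p ≤ carry q p := by
  intro i
  unfold carry
  split_ifs with h
  · exact h.le
  · exact le_max_right _ _

theorem carry_le_max (q p : ι → ℕ) (i : ι) : carry q p i ≤ max (q i) (p i) := by
  unfold carry
  split_ifs <;> simp

theorem carry_eq_zero {i : ι} (h : p i = 0) : carry q p i = 0 :=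
  if_pos h

theorem carry_of_ne_zero {i : ι} (h : p i ≠ 0) : carry q p i = max (q i) (p i) :=
  if_neg h

theorem antitone_carry [Preorder ι] (hq : Antitone q) (hp : Antitone p) :
    Antitone (carry q p) := by
  intro i i' hi
  by_cases hi' : p i' = 0
  · simp [carry_eq_zero hi']
  · have hpi : p i ≠ 0 := fun h => hi' (Nat.le_zero.1 (h ▸ hp hi))
    rw [carry_of_ne_zero hi', carry_of_ne_zero hpi]
    exact max_le_max (hq hi) (hp hi)

theorem carry_fiber_imp_or [LinearOrder ι] (hq : Antitone q) (hp : Antitone p) {j : ℕ}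
    (hj : j ≠ 0) :
    (∀ i, carry q p i = j → q i = j) ∨ (∀ i, carry q p i = j → p i = j) := by
  have hmax {i : ι} (hi : carry q p i = j) : max (q i) (p i) = j := by
    rwa [carry_of_ne_zero fun h => hj (hi ▸ carry_eq_zero h)] at hi
  by_contra! h
  obtain ⟨⟨k, hk, hqk⟩, i, hi, hpi⟩ := h
  have hk' := hmax hk
  have hi' := hmax hi
  rcases le_total k i with hki | hik
  · have := hq hki
    omega
  · have := hp hik
    omega

end Carry

/-- The feasibility conditions on the configuration `p` of a single time slot that do not depend on
the time: `p k` is the server type serving lane `k`. -/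
structure SlotAdmissible (d mtot : ℕ) (m p : ℕ → ℕ) : Prop where
  eq_zero : ∀ k, mtot < k → p k = 0
  le : ∀ k, p k ≤ d
  antitone : Antitone p
  card_le : ∀ j, 1 ≤ j → #{k ∈ Icc 1 mtot | p k = j} ≤ m j

namespace SlotAdmissible

variable {d mtot : ℕ} {m p q : ℕ → ℕ}

protected theorem piecewise (hp : SlotAdmissible d mtot m p)
    (hq : SlotAdmissible d mtot m q) (hqp : q ≤ p) {S : Set ℕ} [∀ k, Decidable (k ∈ S)]
    (hS : IsLowerSet S) : SlotAdmissible d mtot m (S.piecewise p q) where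
  eq_zero k hk := by simp [Set.piecewise, hp.eq_zero k hk, hq.eq_zero k hk]
  le k := Set.piecewise_le (fun _ _ => hp.le _) (fun _ _ => hq.le _) k
  antitone := antitone_piecewise_of_isLowerSet hp.antitone hq.antitone hqp hS
  card_le j hj := by
    rcases piecewise_fiber_imp_or hp.antitone hqp hS j with h | h
    · exact (card_le_card (monotone_filter_right _ fun k _ => h k)).trans (hp.card_le j hj)
    · exact (card_le_card (monotone_filter_right _ fun k _ => h k)).trans (hq.card_le j hj)

protected theorem carry (hq : SlotAdmissible d mtot m q) (hp : SlotAdmissible d mtot m p) :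
    SlotAdmissible d mtot m (carry q p) where
  eq_zero k hk := carry_eq_zero (hp.eq_zero k hk)
  le k := (carry_le_max q p k).trans (max_le (hq.le k) (hp.le k))
  antitone := antitone_carry hq.antitone hp.antitone
  card_le j hj := by
    rcases carry_fiber_imp_or hq.antitone hp.antitone (Nat.one_le_iff_ne_zero.1 hj) with h | h
    · exact (card_le_card (monotone_filter_right _ fun k _ => h k)).trans (hq.card_le j hj)
    · exact (card_le_card (monotone_filter_right _ fun k _ => h k)).trans (hp.card_le j hj)

end SlotAdmissible

section Schedules

variable {T T' d mtot : ℕ} {m lam : ℕ → ℕ} {a b y : ℕ → ℕ → ℕ}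

theorem laneFeasible_iff_slotAdmissible :
    LaneFeasible T d mtot m lam y ↔
      y 0 = 0 ∧ (∀ t, T < t → y t = 0) ∧
      (∀ t ∈ Icc 1 T, ∀ k ∈ Icc 1 mtot, k ≤ lam t → 1 ≤ y t k) ∧
      ∀ t, SlotAdmissible d mtot m (y t) := by
  constructor
  · rintro ⟨h0, hT, hm, hdemand, hd, hanti, hcard⟩
    exact ⟨funext h0, fun t ht => funext fun k => hT t k ht, hdemand,
      fun t => ⟨hm t, hd t, fun k k' => hanti t k k', hcard t⟩⟩
  · rintro ⟨h0, hT, hdemand, hslot⟩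
    exact ⟨congrFun h0, fun t k ht => congrFun (hT t ht) k, fun t => (hslot t).eq_zero, hdemand,
      fun t => (hslot t).le, fun t _ _ hk => (hslot t).antitone hk, fun t => (hslot t).card_le⟩

open Classical in
/-- The schedule that follows `a` on the set `R` of pairs `(t, k)` of a time slot and a lane, and
`b` off `R`. -/
noncomputable def graft (R : Set (ℕ × ℕ)) (a b : ℕ → ℕ → ℕ) (t : ℕ) : ℕ → ℕ :=
  {k | (t, k) ∈ R}.piecewise (a t) (b t)

theorem graft_of_mem {R : Set (ℕ × ℕ)} {t k : ℕ} (h : (t, k) ∈ R) : graft R a b t k = a t k :=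
  if_pos h

theorem graft_of_notMem {R : Set (ℕ × ℕ)} {t k : ℕ} (h : (t, k) ∉ R) :
    graft R a b t k = b t k :=
  if_neg h

theorem le_graft (hba : b ≤ a) (R : Set (ℕ × ℕ)) : b ≤ graft R a b := by
  classical exact fun t => Set.le_piecewise (fun k _ => hba t k) (fun _ _ => le_rfl)

protected theorem LaneFeasible.graft (ha : LaneFeasible T' d mtot m lam a)
    (hb : LaneFeasible T d mtot m lam b) (hba : b ≤ a) {R : Set (ℕ × ℕ)} (hR : IsLowerSet R)
    (hRT : ∀ x ∈ R, x.1 ≤ T) : LaneFeasible T d mtot m lam (graft R a b) := by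
  obtain ⟨ha0, -, -, haslot⟩ := laneFeasible_iff_slotAdmissible.1 ha
  obtain ⟨hb0, hbT, hbdemand, hbslot⟩ := laneFeasible_iff_slotAdmissible.1 hb
  refine laneFeasible_iff_slotAdmissible.2 ⟨?_, fun t ht => ?_, fun t ht k hk hlam => ?_,
    fun t => ?_⟩
  · simp [graft, ha0, hb0]
  · ext k
    rw [graft_of_notMem fun h => ht.not_ge (hRT _ h), hbT t ht]
  · exact (hbdemand t ht k hk hlam).trans (le_graft hba R t k)
  · classical
    exact (haslot t).piecewise (hbslot t) (hba t)
      fun k k' hk hkR => hR (Prod.mk_le_mk.2 ⟨le_rfl, hk⟩) hkR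

/-- The schedule that follows `y` but never downgrades a lane while it stays active. -/
def ratchet (y : ℕ → ℕ → ℕ) : ℕ → ℕ → ℕ
  | 0 => y 0
  | t + 1 => carry (ratchet y t) (y (t + 1))

theorem le_ratchet (y : ℕ → ℕ → ℕ) : y ≤ ratchet y
  | 0 => le_rfl
  | t + 1 => le_carry (ratchet y t) (y (t + 1))

protected theorem LaneFeasible.ratchet (hy : LaneFeasible T d mtot m lam y) :
    LaneFeasible T d mtot m lam (ratchet y) := by
  obtain ⟨h0, hT, hdemand, hslot⟩ := laneFeasible_iff_slotAdmissible.1 hy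
  refine laneFeasible_iff_slotAdmissible.2 ⟨h0, fun t ht => ?_, fun t ht k hk hlam => ?_,
    fun t => ?_⟩
  · obtain ⟨t, rfl⟩ := Nat.exists_eq_add_one_of_ne_zero (Nat.ne_zero_of_lt ht)
    exact funext fun k => carry_eq_zero (congrFun (hT _ ht) k)
  · exact (hdemand t ht k hk hlam).trans (le_ratchet y t k)
  · induction t with
    | zero => exact hslot 0
    | succ t ih => exact ih.carry (hslot (t + 1))

end Schedules

section Cost

variable {u v d mtot : ℕ} {m lam : ℕ → ℕ} {β l : ℕ → ℝ} {a b c y : ℕ → ℕ → ℕ}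

theorem laneCostTK_ratchet_succ_le (hl : AntitoneOn l (Set.Icc 1 d))
    (hβ : ∀ j ∈ Set.Icc 1 d, 0 ≤ β j) {t k : ℕ} (hd : ratchet c (t + 1) k ≤ d)
    (hprev : y t k ≤ c t k) (hcur : c (t + 1) k = y (t + 1) k) :
    laneCostTK β l (ratchet c) (t + 1) k ≤ laneCostTK β l y (t + 1) k := by
  by_cases hy : y (t + 1) k = 0
  · have hc : ratchet c (t + 1) k = 0 := carry_eq_zero (hcur.trans hy)
    simp [laneCostTK, hy, hc]
  have hmax : ratchet c (t + 1) k = max (ratchet c t k) (y (t + 1) k) := by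
    rw [← hcur] at hy ⊢
    exact carry_of_ne_zero hy
  have hyd : y (t + 1) k ∈ Set.Icc 1 d :=
    ⟨Nat.one_le_iff_ne_zero.2 hy, (le_max_right _ _).trans (hmax ▸ hd)⟩
  rcases lt_or_ge (ratchet c t k) (y (t + 1) k) with hlt | hge
  · have hup : ratchet c (t + 1) k = y (t + 1) k := hmax.trans (max_eq_right hlt.le)
    have hylt : y t k < y (t + 1) k := (hprev.trans (le_ratchet c t k)).trans_lt hlt
    simp [laneCostTK, hup, hlt.ne, hylt.ne]
  · have hstay : ratchet c (t + 1) k = ratchet c t k := hmax.trans (max_eq_left hge)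
    have hcd : ratchet c t k ∈ Set.Icc 1 d := ⟨hyd.1.trans hge, hstay ▸ hd⟩
    calc laneCostTK β l (ratchet c) (t + 1) k
        = l (ratchet c t k) := by
          simp [laneCostTK, hstay, Nat.one_le_iff_ne_zero.1 hcd.1]
      _ ≤ l (y (t + 1) k) := hl hyd hcd hge
      _ ≤ laneCostTK β l y (t + 1) k := by
          have := hβ _ hyd
          simp only [laneCostTK, if_neg hy]
          split_ifs <;> linarith

theorem laneCostTK_ratchet_graft_le_of_mem (hl : AntitoneOn l (Set.Icc 1 d))
    (hβ : ∀ j ∈ Set.Icc 1 d, 0 ≤ β j) {R : Set (ℕ × ℕ)} (hR : IsLowerSet R) {t k : ℕ}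
    (hd : ratchet (graft R a b) (t + 1) k ≤ d) (h : (t + 1, k) ∈ R) :
    laneCostTK β l (ratchet (graft R a b)) (t + 1) k ≤ laneCostTK β l a (t + 1) k :=
  have hprev : (t, k) ∈ R := hR (Prod.mk_le_mk.2 ⟨t.le_succ, le_rfl⟩) h
  laneCostTK_ratchet_succ_le hl hβ hd (graft_of_mem hprev).ge (graft_of_mem h)

theorem laneCostTK_ratchet_graft_le_of_notMem (hl : AntitoneOn l (Set.Icc 1 d))
    (hβ : ∀ j ∈ Set.Icc 1 d, 0 ≤ β j) (hba : b ≤ a) {R : Set (ℕ × ℕ)} {t k : ℕ}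
    (hd : ratchet (graft R a b) (t + 1) k ≤ d) (h : (t + 1, k) ∉ R) :
    laneCostTK β l (ratchet (graft R a b)) (t + 1) k ≤ laneCostTK β l b (t + 1) k :=
  laneCostTK_ratchet_succ_le hl hβ hd (le_graft hba R t k) (graft_of_notMem h)

theorem sum_indicator_laneCostTK_le (hl : AntitoneOn l (Set.Icc 1 d))
    (hβ : ∀ j ∈ Set.Icc 1 d, 0 ≤ β j) (ha : LaneFeasible v d mtot m lam a)
    (hb : LaneOptimal u d mtot m lam β l b) (hba : b ≤ a) {R : Set (ℕ × ℕ)} (hR : IsLowerSet R) :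
    ∑ x ∈ Icc 1 u ×ˢ Icc 1 mtot, R.indicator (Function.uncurry (laneCostTK β l b)) x ≤
      ∑ x ∈ Icc 1 u ×ˢ Icc 1 mtot, R.indicator (Function.uncurry (laneCostTK β l a)) x := by
  let R' : Set (ℕ × ℕ) := R ∩ {x | x.1 ≤ u}
  have hR' : IsLowerSet R' := hR.inter fun _ _ hyx hx => hyx.1.trans hx
  let z := ratchet (graft R' a b)
  have hz : LaneFeasible u d mtot m lam z := (ha.graft hb.1 hba hR' fun _ hx => hx.2).ratchet
  have hzd (t k : ℕ) : z t k ≤ d := ((laneFeasible_iff_slotAdmissible.1 hz).2.2.2 t).le k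
  have hslot : ∀ x ∈ Icc 1 u ×ˢ Icc 1 mtot,
      Function.uncurry (laneCostTK β l z) x +
          R.indicator (Function.uncurry (laneCostTK β l b)) x ≤
        Function.uncurry (laneCostTK β l b) x +
          R.indicator (Function.uncurry (laneCostTK β l a)) x := by
    rintro ⟨t, k⟩ hx
    obtain ⟨ht1, htu⟩ := mem_Icc.1 (mem_product.1 hx).1
    obtain ⟨t, rfl⟩ := Nat.exists_eq_add_of_le' ht1
    by_cases hxR : (t + 1, k) ∈ R
    · have hza : laneCostTK β l z (t + 1) k ≤ laneCostTK β l a (t + 1) k :=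
        laneCostTK_ratchet_graft_le_of_mem hl hβ hR' (hzd _ _) ⟨hxR, htu⟩
      simp only [Set.indicator_of_mem hxR, Function.uncurry_apply_pair]
      linarith
    · have hzb : laneCostTK β l z (t + 1) k ≤ laneCostTK β l b (t + 1) k :=
        laneCostTK_ratchet_graft_le_of_notMem hl hβ hba (hzd _ _) fun h => hxR h.1
      simpa only [Set.indicator_of_notMem hxR, add_zero, Function.uncurry_apply_pair] using hzb
  have hsum := sum_le_sum hslot
  have hbz : ∑ x ∈ Icc 1 u ×ˢ Icc 1 mtot, Function.uncurry (laneCostTK β l b) x ≤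
      ∑ x ∈ Icc 1 u ×ˢ Icc 1 mtot, Function.uncurry (laneCostTK β l z) x := by
    simpa only [laneCost, sum_product, Function.uncurry_apply_pair] using hb.2 z hz
  simp only [sum_add_distrib] at hsum
  linarith

theorem weighted_cost_le_general (hl : AntitoneOn l (Set.Icc 1 d))
    (hβ : ∀ j ∈ Set.Icc 1 d, 0 ≤ β j) (ha : LaneFeasible v d mtot m lam a)
    (hb : LaneOptimal u d mtot m lam β l b) (hba : b ≤ a) {w : ℕ → ℕ → ℝ}
    (hw : Antitone (Function.uncurry w)) (hw0 : 0 ≤ w) :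
    ∑ k ∈ Icc 1 mtot, ∑ t ∈ Icc 1 u, w t k * laneCostTK β l b t k ≤
      ∑ k ∈ Icc 1 mtot, ∑ t ∈ Icc 1 u, w t k * laneCostTK β l a t k := by
  have h := sum_smul_le_sum_smul_of_antitone hw (fun x _ => hw0 x.1 x.2)
    fun R hR => sum_indicator_laneCostTK_le hl hβ ha hb hba hR
  simpa only [sum_product_right, Function.uncurry_apply_pair, smul_eq_mul] using h

end Cost

theorem antitone_ytilde {Yhat : ℕ → ℕ → ℕ → ℕ} (hY : ∀ t, Antitone (Yhat t t)) (u : ℕ) :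
    Antitone (Function.uncurry (ytilde Yhat u)) := fun _ _ h =>
  (sup_mono_fun fun t _ => hY t h.2).trans (sup_mono (Icc_subset_Icc_left h.1))

/-- Let `Yhat t` be optimal schedules for the truncated instances, chosen
monotonically, and let `u < v`. Then the per-slot costs of `X̂^u` weighted by
`ỹ^u_{t,k}` are at most the correspondingly weighted per-slot costs of `X̂^v`:
`∑_{k=1}^{mtot} ∑_{t=1}^{u} ỹ^u_{t,k} · C_{t,k}(X̂^u) ≤ ∑_{k=1}^{mtot} ∑_{t=1}^{u} ỹ^u_{t,k} · C_{t,k}(X̂^v)`. -/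
theorem weighted_cost_le (d mtot : ℕ) (m lam : ℕ → ℕ) (β l : ℕ → ℝ)
    (hl : ∀ j j', 1 ≤ j → j < j' → j' ≤ d → l j' < l j)
    (hl0 : ∀ j, 1 ≤ j → j ≤ d → 0 ≤ l j)
    (hβ : ∀ j j', 1 ≤ j → j < j' → j' ≤ d → β j < β j')
    (hβ0 : ∀ j, 1 ≤ j → j ≤ d → 0 < β j)
    (Yhat : ℕ → ℕ → ℕ → ℕ)
    (hopt : ∀ t, LaneOptimal t d mtot m lam β l (Yhat t))
    (hdom : ∀ t t'' k, Yhat t t'' k ≤ Yhat (t + 1) t'' k)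
    (u v : ℕ) (huv : u < v) :
    ∑ k ∈ Finset.Icc 1 mtot, ∑ t ∈ Finset.Icc 1 u,
        (ytilde Yhat u t k : ℝ) * laneCostTK β l (Yhat u) t k
    ≤ ∑ k ∈ Finset.Icc 1 mtot, ∑ t ∈ Finset.Icc 1 u,
        (ytilde Yhat u t k : ℝ) * laneCostTK β l (Yhat v) t k := by
  have hl' : StrictAntiOn l (Set.Icc 1 d) := fun i hi j hj hij => hl i j hi.1 hij hj.2
  have hY : Monotone Yhat := monotone_nat_of_le_succ fun t => hdom t
  have hw : Antitone (Function.uncurry (ytilde Yhat u)) :=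
    antitone_ytilde (fun t _ _ hk => (hopt t).1.2.2.2.2.2.1 t _ _ hk) u
  exact weighted_cost_le_general hl'.antitoneOn (fun j hj => (hβ0 j hj.1 hj.2).le) (hopt v).1
    (hopt u) (hY huv.le) (Nat.mono_cast.comp_antitone hw) fun _ _ => Nat.cast_nonneg _
end

section
/- The deterministic online algorithm A for data-center right-sizing with d heterogeneous server types (constant per-slot operating costs, no inefficient types) produces a feasible schedule whose total cost is at most 2d times the cost of an optimal offline schedule. -/
open Finset

/-- A schedule `x` (where `x t j` is the number of active servers of type `j` at time `t`)
is feasible for horizon `T`, `d` server types with `m j` servers of type `j`, and job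
volumes `lam`: all servers are off at time `0` and after time `T`, the demand is met,
and no more servers are used than available. -/
def Feasible (T d : ℕ) (m lam : ℕ → ℕ) (x : ℕ → ℕ → ℕ) : Prop :=
  (∀ j, x 0 j = 0) ∧
  (∀ t, T < t → ∀ j, x t j = 0) ∧
  (∀ t ∈ Finset.Icc 1 T, lam t ≤ ∑ j ∈ Finset.Icc 1 d, x t j ∧ ∀ j, x t j ≤ m j)

/-- Total cost of a schedule: operating costs plus switching costs for powering up. -/
noncomputable def cost (T d : ℕ) (β l : ℕ → ℝ) (x : ℕ → ℕ → ℕ) : ℝ :=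
  ∑ t ∈ Finset.Icc 1 T, ∑ j ∈ Finset.Icc 1 d,
    (l j * (x t j : ℝ) + β j * ((x t j - x (t - 1) j : ℕ) : ℝ))

/-- An optimal schedule: feasible and of minimum cost among feasible schedules. -/
def Optimal (T d : ℕ) (m lam : ℕ → ℕ) (β l : ℕ → ℝ) (x : ℕ → ℕ → ℕ) : Prop :=
  Feasible T d m lam x ∧
  ∀ x', Feasible T d m lam x' → cost T d β l x ≤ cost T d β l x'

/-- The lane representation: `lane d x t k` is the server type serving lane `k`
at time `t` (largest `j ∈ [1,d]` with `∑_{j'=j}^{d} x t j' ≥ k`, else `0`). -/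
noncomputable def lane (d : ℕ) (x : ℕ → ℕ → ℕ) (t k : ℕ) : ℕ :=
  sSup {j | j ∈ Finset.Icc 1 d ∧ k ≤ ∑ j' ∈ Finset.Icc j d, x t j'}

/-- The schedule produced by an online algorithm `A`: at each time slot `t ∈ [1,T]`,
the number of active servers of each type is determined only by the job volumes
`lam 1, …, lam t` seen so far. -/
def onlineSched (A : List ℕ → ℕ → ℕ) (T d : ℕ) (lam : ℕ → ℕ) (t j : ℕ) : ℕ :=
  if 1 ≤ t ∧ t ≤ T ∧ 1 ≤ j ∧ j ≤ d then
    A ((List.range t).map (fun i => lam (i + 1))) j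
  else 0

/-!
Idea. Sort the servers active at a time by decreasing type; the `k`-th one is the state of lane `k`.
When upgrades are charged only the difference of the power-up costs, the lanes cost no more than
the schedule, and the cost is submodular in the lanes. Hence the optimal lane schedules, with ties
broken in favour of large types, increase with the horizon; and in each of them a lane, while it is
active, never changes to a smaller type.

In each lane the algorithm requests the type which the current optimal schedule uses there. A
request of type `i` is charged its running cost plus the cheaper of powering up and bridging the
time since type `i` was last requested in the lane; twice the charges pay for the lane, the surplus
prepaying the slots in which a server runs without request.

For a fixed type, the charges of all lanes together are at most the optimal cost. When the horizon
grows from `u` to `u + 1`, consider in each lane the slots up to the last request of this or a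
larger type. On all these slots together the new schedule is at least as expensive as the old one,
since otherwise a mixture of both would improve on the old one; on the later slots of a lane it pays
for the new charge. Summing over the `d` types gives the factor `2 d`.
-/

/-! ### Cost of a single lane -/

/-- Running costs `run` and power-up costs `power` of the server types, seen as the states of a
lane. The state `0` is the idle lane, and the costs are extended monotonically to all of `ℕ`, so
that no bound on the type is needed to compare them. -/
structure LaneCosts where
  run : ℕ → ℝ
  power : ℕ → ℝ
  run_zero : run 0 = 0
  power_zero : power 0 = 0
  run_pos : ∀ i, 1 ≤ i → 0 < run i
  run_anti : ∀ i j, 1 ≤ i → i ≤ j → run j ≤ run i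
  power_mono : Monotone power

lemma exists_laneCosts {d : ℕ} (hd : 1 ≤ d) {β l : ℕ → ℝ} (hl : AntitoneOn l (Set.Icc 1 d))
    (hl0 : 0 < l d) (hβ : MonotoneOn β (Set.Icc 1 d)) (hβ0 : 0 ≤ β 1) :
    ∃ c : LaneCosts, ∀ j ∈ Icc 1 d, c.run j = l j ∧ c.power j = β j := by
  have clamp_mem : ∀ i, 1 ≤ i → min i d ∈ Set.Icc 1 d := fun i hi =>
    ⟨le_min hi hd, min_le_right i d⟩
  refine ⟨⟨fun i => if i = 0 then 0 else l (min i d), fun i => if i = 0 then 0 else β (min i d),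
    if_pos rfl, if_pos rfl, fun i hi => ?_, fun i j hi hij => ?_, fun i j hij => ?_⟩,
    fun j hj => ?_⟩
  · rw [if_neg (by omega)]
    exact hl0.trans_le (hl (clamp_mem i hi) ⟨hd, le_rfl⟩ (min_le_right i d))
  · rw [if_neg (by omega), if_neg (by omega)]
    exact hl (clamp_mem i hi) (clamp_mem j (hi.trans hij)) (min_le_min_right d hij)
  · by_cases hi : i = 0
    · have hβ_nonneg : ∀ a ∈ Set.Icc 1 d, 0 ≤ β a := fun a ha =>
        hβ0.trans (hβ ⟨le_rfl, hd⟩ ha ha.1)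
      simp only [hi, if_true]
      split_ifs with hj
      exacts [le_rfl, hβ_nonneg _ (clamp_mem j (Nat.one_le_iff_ne_zero.2 hj))]
    · simp only [hi, if_false, show j ≠ 0 by omega]
      exact hβ (clamp_mem i (by omega)) (clamp_mem j (by omega)) (min_le_min_right d hij)
  · obtain ⟨hj1, hjd⟩ := mem_Icc.1 hj
    simp only [show j ≠ 0 by omega, if_false, min_eq_left hjd, and_self]

namespace LaneCosts

variable (c : LaneCosts)

lemma run_nonneg (i : ℕ) : 0 ≤ c.run i := by
  rcases Nat.eq_zero_or_pos i with rfl | hi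
  · exact c.run_zero.ge
  · exact (c.run_pos i hi).le

lemma power_nonneg (i : ℕ) : 0 ≤ c.power i :=
  c.power_zero.ge.trans (c.power_mono (Nat.zero_le i))

/-- Relaxed cost of a slot in which a lane moves from state `i` to state `j`: an upgrade is charged
only the difference of the power-up costs. -/
noncomputable def step (i j : ℕ) : ℝ := c.run j + max 0 (c.power j - c.power i)

lemma run_le_step (i j : ℕ) : c.run j ≤ c.step i j :=
  le_add_of_nonneg_right (le_max_left _ _)

lemma step_nonneg (i j : ℕ) : 0 ≤ c.step i j :=
  (c.run_nonneg j).trans (c.run_le_step i j)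

lemma power_sub_add_run_le_step (i j : ℕ) : c.power j - c.power i + c.run j ≤ c.step i j := by
  rw [add_comm]
  exact add_le_add_right (le_max_right _ _) _

lemma step_antitone_left (j : ℕ) : Antitone (c.step · j) := fun _ _ h =>
  add_le_add_right (max_le_max_left 0 (sub_le_sub_left (c.power_mono h) _)) _

lemma step_self (i : ℕ) : c.step i i = c.run i := by
  simp only [step, sub_self, max_self, add_zero]

lemma step_sup_le {i j : ℕ} (hj : 1 ≤ j) : c.step i (j ⊔ i) ≤ c.step i j := by
  rcases le_total i j with h | h
  · rw [sup_of_le_left h]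
  · rw [sup_of_le_right h, c.step_self]
    exact (c.run_anti j i hj h).trans (c.run_le_step i j)

lemma step_inf_add_step_sup_le (i i' j j' : ℕ) :
    c.step (i ⊓ i') (j ⊓ j') + c.step (i ⊔ i') (j ⊔ j') ≤ c.step i j + c.step i' j' := by
  have max_sub_submodular : ∀ p p' q q' : ℝ,
      max 0 (min q q' - min p p') + max 0 (max q q' - max p p') ≤
        max 0 (q - p) + max 0 (q' - p') := by grind
  have hpower := max_sub_submodular (c.power i) (c.power i') (c.power j) (c.power j')
  rw [← c.power_mono.map_min, ← c.power_mono.map_min, ← c.power_mono.map_max,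
    ← c.power_mono.map_max] at hpower
  have hrun : c.run (min j j') + c.run (max j j') = c.run j + c.run j' := by
    rcases le_total j j' with h | h
    · rw [min_eq_left h, max_eq_right h]
    · rw [min_eq_right h, max_eq_left h, add_comm]
  simp only [step]
  linarith

/-- Relaxed cost of the path `y` of a lane on the slots `s + 1, …, t`. -/
noncomputable def pathCost (y : ℕ → ℕ) (s t : ℕ) : ℝ :=
  ∑ r ∈ Ico s t, c.step (y r) (y (r + 1))

variable {c} in
lemma pathCost_congr {y y' : ℕ → ℕ} {s t : ℕ} (h : ∀ r ∈ Set.Icc s t, y r = y' r) :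
    c.pathCost y s t = c.pathCost y' s t := by
  refine sum_congr rfl fun r hr => ?_
  obtain ⟨hsr, hrt⟩ := mem_Ico.1 hr
  rw [h r ⟨hsr, hrt.le⟩, h (r + 1) ⟨by omega, hrt⟩]

lemma pathCost_nonneg (y : ℕ → ℕ) (s t : ℕ) : 0 ≤ c.pathCost y s t :=
  sum_nonneg fun _ _ => c.step_nonneg _ _

lemma pathCost_add (y : ℕ → ℕ) {r s t : ℕ} (hrs : r ≤ s) (hst : s ≤ t) :
    c.pathCost y r s + c.pathCost y s t = c.pathCost y r t :=
  sum_Ico_consecutive _ hrs hst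

lemma pathCost_succ (y : ℕ → ℕ) {s t : ℕ} (hst : s ≤ t) :
    c.pathCost y s (t + 1) = c.pathCost y s t + c.step (y t) (y (t + 1)) :=
  sum_Ico_succ_top hst _

lemma pathCost_le_pathCost (y : ℕ → ℕ) {r s t : ℕ} (hrs : r ≤ s) (hst : s ≤ t) :
    c.pathCost y s t ≤ c.pathCost y r t := by
  rw [← c.pathCost_add y hrs hst]
  exact le_add_of_nonneg_left (c.pathCost_nonneg y r s)

lemma pathCost_le_of_le_left {y y' : ℕ → ℕ} {s t : ℕ} (hs : y' s ≤ y s)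
    (h : ∀ r, s < r → r ≤ t → y r = y' r) : c.pathCost y s t ≤ c.pathCost y' s t := by
  refine sum_le_sum fun r hr => ?_
  obtain ⟨hsr, hrt⟩ := mem_Ico.1 hr
  rw [h (r + 1) (by omega) hrt]
  rcases hsr.eq_or_lt with rfl | hsr
  · exact c.step_antitone_left _ hs
  · rw [h r hsr hrt.le]

lemma power_sub_add_run_le_pathCost (y : ℕ → ℕ) {s t : ℕ} (hst : s < t) :
    c.power (y t) - c.power (y s) + c.run (y t) ≤ c.pathCost y s t := by
  induction t, Nat.succ_le_of_lt hst using Nat.le_induction with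
  | base =>
    rw [Nat.succ_eq_add_one, c.pathCost_succ y le_rfl, pathCost, Ico_self, sum_empty, zero_add]
    exact c.power_sub_add_run_le_step _ _
  | succ t ht ih =>
    rw [c.pathCost_succ y (by omega)]
    linarith [ih (by omega), c.power_sub_add_run_le_step (y t) (y (t + 1)), c.run_nonneg (y t)]

lemma mul_run_le_pathCost {y : ℕ → ℕ} {s t i : ℕ} (hst : s ≤ t)
    (hy : ∀ r, s < r → r ≤ t → 1 ≤ y r ∧ y r ≤ i) :
    ((t : ℝ) - s) * c.run i ≤ c.pathCost y s t := by
  calc ((t : ℝ) - s) * c.run i = ∑ _r ∈ Ico s t, c.run i := by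
        rw [sum_const, Nat.card_Ico, nsmul_eq_mul, Nat.cast_sub hst]
    _ ≤ c.pathCost y s t := sum_le_sum fun r hr => by
        obtain ⟨hsr, hrt⟩ := mem_Ico.1 hr
        obtain ⟨hpos, hle⟩ := hy (r + 1) (by omega) hrt
        exact (c.run_anti _ _ hpos hle).trans (c.run_le_step _ _)

/-- Relaxed cost up to time `u` of a schedule `y`, where `y t k` is the state of lane `k < N` at
time `t`. -/
noncomputable def totalCost (N u : ℕ) (y : ℕ → ℕ → ℕ) : ℝ :=
  ∑ k ∈ range N, c.pathCost (y · k) 0 u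

lemma totalCost_inf_add_totalCost_sup_le (N u : ℕ) (y y' : ℕ → ℕ → ℕ) :
    c.totalCost N u (y ⊓ y') + c.totalCost N u (y ⊔ y') ≤
      c.totalCost N u y + c.totalCost N u y' := by
  simp only [totalCost, pathCost, ← sum_add_distrib]
  exact sum_le_sum fun k _ => sum_le_sum fun s _ => c.step_inf_add_step_sup_le _ _ _ _

lemma totalCost_succ (N u : ℕ) (y : ℕ → ℕ → ℕ) :
    c.totalCost N (u + 1) y =
      c.totalCost N u y + ∑ k ∈ range N, c.step (y u k) (y (u + 1) k) := by
  simp only [totalCost, c.pathCost_succ _ (Nat.zero_le u), sum_add_distrib]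

end LaneCosts

/-! ### States and schedules of the lanes -/

/-- Admissible assignments of types to the lanes `0, 1, 2, …`: the types decrease along the lanes
and only the first `N` lanes can be active. Given the monotonicity, the condition `capacity` says
that at most `m j` lanes have type `j`; this form is visibly stable under `⊔` and `⊓`. -/
structure IsLaneState (d N : ℕ) (m y : ℕ → ℕ) : Prop where
  le : ∀ k, y k ≤ d
  anti : Antitone y
  capacity : ∀ j, 1 ≤ j → j ≤ d → ∀ k, j ≤ y (k + m j) → j < y k
  idle : ∀ k, N ≤ k → y k = 0

namespace IsLaneState

variable {d N : ℕ} {m y y' : ℕ → ℕ}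

lemma sup (h : IsLaneState d N m y) (h' : IsLaneState d N m y') : IsLaneState d N m (y ⊔ y') where
  le k := max_le (h.le k) (h'.le k)
  anti := h.anti.sup h'.anti
  capacity j hj hjd k hk := (le_max_iff.1 hk).elim
    (fun hk => lt_max_of_lt_left (h.capacity j hj hjd k hk))
    (fun hk => lt_max_of_lt_right (h'.capacity j hj hjd k hk))
  idle k hk := by simp only [Pi.sup_apply, h.idle k hk, h'.idle k hk, max_self]

lemma inf (h : IsLaneState d N m y) (h' : IsLaneState d N m y') : IsLaneState d N m (y ⊓ y') where
  le k := (min_le_left _ _).trans (h.le k)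
  anti := h.anti.inf h'.anti
  capacity j hj hjd k hk := lt_min (h.capacity j hj hjd k (le_min_iff.1 hk).1)
    (h'.capacity j hj hjd k (le_min_iff.1 hk).2)
  idle k hk := by simp only [Pi.inf_apply, h.idle k hk, h'.idle k hk, min_self]

lemma indicator (h : IsLaneState d N m y) {s : Set ℕ} (hs : IsLowerSet s) :
    IsLaneState d N m (s.indicator y) where
  le k := (Set.indicator_le_self' (fun _ _ => Nat.zero_le _) k).trans (h.le k)
  anti k k' hk := by
    by_cases hk' : k' ∈ s
    · rw [Set.indicator_of_mem hk', Set.indicator_of_mem (hs hk hk')]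
      exact h.anti hk
    · rw [Set.indicator_of_notMem hk']
      exact Nat.zero_le _
  capacity j hj hjd k hk := by
    have hmem : k + m j ∈ s := Set.mem_of_indicator_ne_zero (f := y) (by omega)
    rw [Set.indicator_of_mem hmem] at hk
    rw [Set.indicator_of_mem (hs (Nat.le_add_right k (m j)) hmem)]
    exact h.capacity j hj hjd k hk
  idle k hk := Set.indicator_apply_eq_zero.2 fun _ => h.idle k hk

lemma mono (h : IsLaneState d N m y) {N' : ℕ} {m' : ℕ → ℕ} (hN : N ≤ N') (hm : m ≤ m') :
    IsLaneState d N' m' y where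
  le := h.le
  anti := h.anti
  capacity j hj hjd k hk :=
    h.capacity j hj hjd k (hk.trans (h.anti (Nat.add_le_add_left (hm j) k)))
  idle k hk := h.idle k (hN.trans hk)

lemma card_le (h : IsLaneState d N m y) {j : ℕ} (hj : j ∈ Icc 1 d) (s : Finset ℕ) :
    #{k ∈ s | y k = j} ≤ m j := by
  rcases Finset.eq_empty_or_nonempty {k ∈ s | y k = j} with hempty | hne
  · rw [hempty, card_empty]
    exact Nat.zero_le _
  set K := max' {k ∈ s | y k = j} hne
  have hK : y K = j := (mem_filter.1 (max'_mem _ hne)).2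
  have hsub : ({k ∈ s | y k = j} : Finset ℕ) ⊆ Ico (K + 1 - m j) (K + 1) := by
    intro k hk
    have hkK : k ≤ K := le_max' _ k hk
    have hkj : y k = j := (mem_filter.1 hk).2
    refine mem_Ico.2 ⟨?_, by omega⟩
    by_contra hfar
    have hle : j ≤ y (k + m j) := hK.ge.trans (h.anti (show k + m j ≤ K by omega))
    exact (h.capacity j (mem_Icc.1 hj).1 (mem_Icc.1 hj).2 k hle).ne' hkj
  have hcard := card_le_card hsub
  rw [Nat.card_Ico] at hcard
  omega

end IsLaneState

/-- Lane schedules for the job volumes `lam` up to time `u`: `y t k` is the state of lane `k` at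
time `t`. The demand is capped at the number `N` of lanes, so that schedules exist for every
`lam`. -/
structure IsLaneSchedule (d N : ℕ) (m lam : ℕ → ℕ) (u : ℕ) (y : ℕ → ℕ → ℕ) : Prop where
  state : ∀ t, IsLaneState d N m (y t)
  start : y 0 = 0
  finish : ∀ t, u < t → y t = 0
  demand : ∀ t ∈ Icc 1 u, ∀ k, k < lam t → k < N → 1 ≤ y t k

namespace IsLaneSchedule

variable {d N : ℕ} {m lam : ℕ → ℕ} {u u' : ℕ} {y y' : ℕ → ℕ → ℕ}

lemma of_le (h : IsLaneSchedule d N m lam u y) (hle : y ≤ y')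
    (state : ∀ t, IsLaneState d N m (y' t)) (start : y' 0 = 0) (finish : ∀ t, u < t → y' t = 0) :
    IsLaneSchedule d N m lam u y' :=
  ⟨state, start, finish, fun t ht k hk hkN => (h.demand t ht k hk hkN).trans (hle t k)⟩

lemma sup (h : IsLaneSchedule d N m lam u y) (h' : IsLaneSchedule d N m lam u' y') (hu : u ≤ u') :
    IsLaneSchedule d N m lam u' (y ⊔ y') :=
  h'.of_le le_sup_right (fun t => (h.state t).sup (h'.state t))
    (by rw [Pi.sup_apply, h.start, h'.start, sup_idem])
    fun t ht => by rw [Pi.sup_apply, h.finish t (by omega), h'.finish t ht, sup_idem]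

lemma inf (h : IsLaneSchedule d N m lam u y) (h' : IsLaneSchedule d N m lam u' y') (hu : u ≤ u') :
    IsLaneSchedule d N m lam u (y ⊓ y') where
  state t := (h.state t).inf (h'.state t)
  start := by rw [Pi.inf_apply, h.start, h'.start, inf_idem]
  finish t ht := by
    rw [Pi.inf_apply, h.finish t ht]
    exact inf_of_le_left (Pi.le_def.2 fun _ => Nat.zero_le _)
  demand t ht k hk hkN := le_min (h.demand t ht k hk hkN)
    (h'.demand t (Icc_subset_Icc_right hu ht) k hk hkN)

end IsLaneSchedule

lemma isLaneSchedule_congr {d N : ℕ} {m lam lam' : ℕ → ℕ} {u : ℕ} {y : ℕ → ℕ → ℕ}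
    (h : ∀ t ∈ Icc 1 u, lam t = lam' t) :
    IsLaneSchedule d N m lam u y ↔ IsLaneSchedule d N m lam' u y :=
  ⟨fun hy => ⟨hy.state, hy.start, hy.finish, fun t ht k hk => hy.demand t ht k (h t ht ▸ hk)⟩,
    fun hy => ⟨hy.state, hy.start, hy.finish, fun t ht k hk => hy.demand t ht k (h t ht ▸ hk)⟩⟩

lemma finite_setOf_forall_mem_of_le {α : Type*} {s : Set α} (hs : s.Finite) (a : α) (N : ℕ) :
    {f : ℕ → α | (∀ k, f k ∈ s) ∧ ∀ k, N ≤ k → f k = a}.Finite := by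
  have := hs.to_subtype
  let extend : (Fin N → s) → ℕ → α := fun g k => if hk : k < N then g ⟨k, hk⟩ else a
  refine (Set.finite_range extend).subset fun f hf => ⟨fun k => ⟨f k, hf.1 k⟩, ?_⟩
  funext k
  by_cases hk : k < N
  · simp only [extend, hk, dite_true]
  · simp only [extend, hk, dite_false, hf.2 k (not_lt.1 hk)]

lemma finite_setOf_isLaneSchedule (d N : ℕ) (m lam : ℕ → ℕ) (u : ℕ) :
    {y | IsLaneSchedule d N m lam u y}.Finite := by
  have hstates : {y | IsLaneState d N m y}.Finite :=
    (finite_setOf_forall_mem_of_le (Set.finite_Iic d) 0 N).subset fun y hy => ⟨hy.le, hy.idle⟩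
  exact (finite_setOf_forall_mem_of_le hstates 0 (u + 1)).subset fun y hy =>
    ⟨hy.state, fun t ht => hy.finish t ht⟩

/-! ### Best lane schedules -/

section Best

variable {c : LaneCosts} {d N : ℕ} {m lam : ℕ → ℕ} {u : ℕ} {a b v : ℕ → ℕ → ℕ}

/-- Lane schedules of minimum relaxed cost. -/
def IsLaneOptimal (c : LaneCosts) (d N : ℕ) (m lam : ℕ → ℕ) (u : ℕ) (y : ℕ → ℕ → ℕ) : Prop :=
  IsLaneSchedule d N m lam u y ∧
    ∀ v, IsLaneSchedule d N m lam u v → c.totalCost N u y ≤ c.totalCost N u v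

/-- Optimal lane schedules that use types as large as possible. This tie-breaking rule makes the
successive optimal schedules computed by the algorithm consistent. -/
def IsBest (c : LaneCosts) (d N : ℕ) (m lam : ℕ → ℕ) (u : ℕ) (b : ℕ → ℕ → ℕ) : Prop :=
  Maximal (IsLaneOptimal c d N m lam u) b

lemma isBest_congr {lam' : ℕ → ℕ} (h : ∀ t ∈ Icc 1 u, lam t = lam' t) :
    IsBest c d N m lam u b ↔ IsBest c d N m lam' u b := by
  simp only [IsBest, Maximal, IsLaneOptimal, isLaneSchedule_congr h]

lemma exists_isBest (c : LaneCosts) (h : ∃ y, IsLaneSchedule d N m lam u y) :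
    ∃ b, IsBest c d N m lam u b := by
  have hfin := finite_setOf_isLaneSchedule d N m lam u
  obtain ⟨y, hy, hmin⟩ := Set.exists_min_image _ (c.totalCost N u) hfin h
  obtain ⟨b, -, hb⟩ := (hfin.subset fun y (hy : IsLaneOptimal c d N m lam u y) =>
    hy.1).exists_le_maximal ⟨hy, hmin⟩
  exact ⟨b, hb⟩

namespace IsBest

lemma isLaneSchedule (hb : IsBest c d N m lam u b) : IsLaneSchedule d N m lam u b := hb.prop.1

lemma le_of_totalCost_le (hb : IsBest c d N m lam u b) (hv : IsLaneSchedule d N m lam u v)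
    (hbv : b ≤ v) (hcost : c.totalCost N u v ≤ c.totalCost N u b) : v ≤ b :=
  hb.le_of_ge ⟨hv, fun w hw => hcost.trans (hb.prop.2 w hw)⟩ hbv

/-- The union of the two schedules is not more expensive than `b`, by submodularity of the cost and
optimality of `a` against the intersection. -/
lemma le_of_succ (ha : IsBest c d N m lam u a) (hb : IsBest c d N m lam (u + 1) b) : a ≤ b := by
  have ha' := ha.isLaneSchedule
  have hb' := hb.isLaneSchedule
  have hsup_succ : ∀ k, (a ⊔ b) (u + 1) k = b (u + 1) k := fun k => by
    simp only [Pi.sup_apply, ha'.finish (u + 1) u.lt_succ_self, Pi.zero_apply, zero_le,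
      sup_of_le_right]
  have hlast : ∑ k ∈ range N, c.step ((a ⊔ b) u k) ((a ⊔ b) (u + 1) k) ≤
      ∑ k ∈ range N, c.step (b u k) (b (u + 1) k) := sum_le_sum fun k _ => by
    rw [hsup_succ]
    exact c.step_antitone_left _ le_sup_right
  have hcost : c.totalCost N (u + 1) (a ⊔ b) ≤ c.totalCost N (u + 1) b := by
    have hinf := ha.prop.2 _ (ha'.inf hb' u.le_succ)
    have hsubmod := c.totalCost_inf_add_totalCost_sup_le N u a b
    rw [c.totalCost_succ, c.totalCost_succ]
    linarith
  exact le_sup_left.trans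
    (hb.le_of_totalCost_le (ha'.sup hb' u.le_succ) le_sup_right hcost)

/-- Otherwise keeping the larger type would be at least as cheap. -/
lemma le_succ_of_one_le (hb : IsBest c d N m lam u b) {s k : ℕ} (hk : 1 ≤ b (s + 1) k) :
    b s k ≤ b (s + 1) k := by
  have hsched := hb.isLaneSchedule
  set v := Function.update b (s + 1) (b (s + 1) ⊔ (Set.Iic k).indicator (b s))
  have hv_succ : v (s + 1) = b (s + 1) ⊔ (Set.Iic k).indicator (b s) := Function.update_self ..
  have hv_of_ne : ∀ t, t ≠ s + 1 → v t = b t := fun t ht => Function.update_of_ne ht _ _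
  have hbv : b ≤ v := le_update_iff.2 ⟨le_sup_left, fun _ _ => le_rfl⟩
  have hsu : s + 1 ≤ u := by
    by_contra! h
    rw [hsched.finish _ h, Pi.zero_apply] at hk
    omega
  have hvsched : IsLaneSchedule d N m lam u v := by
    refine hsched.of_le hbv (fun t => ?_) ((hv_of_ne 0 (by omega)).trans hsched.start)
      fun t ht => (hv_of_ne t (by omega)).trans (hsched.finish t ht)
    rcases eq_or_ne t (s + 1) with rfl | ht
    · rw [hv_succ]
      exact (hsched.state _).sup ((hsched.state s).indicator (isLowerSet_Iic k))
    · rw [hv_of_ne t ht]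
      exact hsched.state t
  have hstep : ∀ r k', c.step (v r k') (v (r + 1) k') ≤ c.step (b r k') (b (r + 1) k') := by
    intro r k'
    rcases eq_or_ne r s with rfl | hr
    · rw [hv_of_ne r (by omega), hv_succ, Pi.sup_apply]
      by_cases hk' : k' ≤ k
      · rw [Set.indicator_of_mem (Set.mem_Iic.2 hk')]
        exact c.step_sup_le (hk.trans ((hsched.state _).anti hk'))
      · rw [Set.indicator_of_notMem (mt Set.mem_Iic.1 hk'), sup_of_le_left (Nat.zero_le _)]
    · rw [hv_of_ne (r + 1) (by omega)]
      exact c.step_antitone_left _ (hbv r k')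
  have hvb := hb.le_of_totalCost_le hvsched hbv
    (sum_le_sum fun k' _ => sum_le_sum fun r _ => hstep r k')
  have hle := hvb (s + 1) k
  rw [hv_succ, Pi.sup_apply, Set.indicator_of_mem (Set.mem_Iic.2 le_rfl)] at hle
  exact le_sup_right.trans hle

end IsBest

/-- Otherwise following `b` in lane `k` up to time `σ k` and `a` afterwards would improve on `a`. -/
lemma IsLaneOptimal.sum_pathCost_le (ha : IsLaneOptimal c d N m lam u a)
    (hb : ∀ t, IsLaneState d N m (b t)) (hb0 : b 0 = 0) (hab : a ≤ b) {σ : ℕ → ℕ}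
    (hσ : Antitone σ) (hσu : ∀ k, σ k ≤ u) :
    ∑ k ∈ range N, c.pathCost (a · k) 0 (σ k) ≤ ∑ k ∈ range N, c.pathCost (b · k) 0 (σ k) := by
  obtain ⟨hsched, hmin⟩ := ha
  set v : ℕ → ℕ → ℕ := fun t => a t ⊔ {k | t ≤ σ k}.indicator (b t) with hv
  have hv_of_le : ∀ t k, t ≤ σ k → v t k = b t k := fun t k ht => by
    simp only [hv, Pi.sup_apply, Set.indicator_of_mem (show k ∈ {k | t ≤ σ k} from ht),
      sup_of_le_right (hab t k)]
  have hv_of_lt : ∀ t k, σ k < t → v t k = a t k := fun t k ht => by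
    simp only [hv, Pi.sup_apply, Set.indicator_of_notMem (show k ∉ {k | t ≤ σ k} from ht.not_ge),
      sup_of_le_left (Nat.zero_le _)]
  have hvsched : IsLaneSchedule d N m lam u v := by
    refine hsched.of_le (fun t => le_sup_left) (fun t => (hsched.state t).sup ?_) ?_ fun t ht => ?_
    · exact (hb t).indicator fun k k' hk (hkt : t ≤ σ k) => hkt.trans (hσ hk)
    · funext k
      rw [hv_of_le 0 k (Nat.zero_le _), hb0]
    · funext k
      rw [hv_of_lt t k ((hσu k).trans_lt ht), hsched.finish t ht]
  have hlane : ∀ k ∈ range N, c.pathCost (v · k) 0 u ≤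
      c.pathCost (b · k) 0 (σ k) + c.pathCost (a · k) (σ k) u := fun k _ => by
    rw [← c.pathCost_add _ (Nat.zero_le (σ k)) (hσu k)]
    refine add_le_add
      (LaneCosts.pathCost_congr fun t (ht : 0 ≤ t ∧ t ≤ σ k) => hv_of_le t k ht.2).le
      (c.pathCost_le_of_le_left ?_ fun t ht _ => hv_of_lt t k ht)
    rw [hv_of_le _ k le_rfl]
    exact hab _ k
  have htotal := (hmin v hvsched).trans (sum_le_sum hlane)
  simp only [LaneCosts.totalCost, ← fun k => c.pathCost_add (a · k) (Nat.zero_le (σ k)) (hσu k),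
    sum_add_distrib] at htotal
  exact le_of_add_le_add_right htotal

end Best

/-! ### The online algorithm in a single lane -/

namespace LaneCosts

variable (c : LaneCosts) (h : ℕ → ℕ)

/-- Number of slots for which the online algorithm keeps a server of type `i` active after a
request: the current slot and the `⌊power i / run i⌋` following ones. -/
noncomputable def runTime (i : ℕ) : ℕ := if i = 0 then 0 else ⌊c.power i / c.run i⌋₊ + 1

lemma runTime_zero : c.runTime 0 = 0 := if_pos rfl

lemma runTime_of_one_le {i : ℕ} (hi : 1 ≤ i) : c.runTime i = ⌊c.power i / c.run i⌋₊ + 1 :=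
  if_neg (Nat.one_le_iff_ne_zero.1 hi)

lemma runTime_pos {i : ℕ} (hi : 1 ≤ i) : 0 < c.runTime i := by
  rw [c.runTime_of_one_le hi]
  exact Nat.succ_pos _

lemma runTime_mono : Monotone c.runTime := fun i j hij => by
  rcases Nat.eq_zero_or_pos i with rfl | hi
  · exact c.runTime_zero.le.trans (Nat.zero_le _)
  rw [c.runTime_of_one_le hi, c.runTime_of_one_le (hi.trans_le hij)]
  exact Nat.succ_le_succ (Nat.floor_le_floor (div_le_div₀ (c.power_nonneg j) (c.power_mono hij)
    (c.run_pos j (hi.trans_le hij)) (c.run_anti i j hi hij)))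

lemma runTime_sub_one_mul_le {i : ℕ} (hi : 1 ≤ i) :
    ((c.runTime i : ℝ) - 1) * c.run i ≤ c.power i := by
  rw [c.runTime_of_one_le hi, Nat.cast_succ, add_sub_cancel_right, ← le_div_iff₀ (c.run_pos i hi)]
  exact Nat.floor_le (div_nonneg (c.power_nonneg i) (c.run_nonneg i))

lemma power_le_runTime_mul {i : ℕ} (hi : 1 ≤ i) : c.power i ≤ c.runTime i * c.run i := by
  rw [c.runTime_of_one_le hi, Nat.cast_succ, ← div_le_iff₀ (c.run_pos i hi)]
  exact (Nat.lt_floor_add_one _).le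

/-- Number of slots, including the current one, for which the lane stays active if nothing more is
requested, when the type requested at time `t` is `h t`. -/
noncomputable def timer : ℕ → ℕ
  | 0 => 0
  | t + 1 => max (timer t - 1) (c.runTime (h (t + 1)))

/-- The type which the online algorithm runs in the lane when the type requested at time `t` is
`h t`. -/
noncomputable def onlineType : ℕ → ℕ
  | 0 => 0
  | t + 1 => if c.timer h (t + 1) = 0 then 0 else max (onlineType t) (h (t + 1))

/-- The timer that takes only the requests of type `i` into account. -/
noncomputable def typeTimer (i : ℕ) : ℕ → ℕ
  | 0 => 0
  | t + 1 => if h (t + 1) = i then c.runTime i else typeTimer i t - 1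

variable {h} in
lemma timer_congr {h' : ℕ → ℕ} {t : ℕ} (hh : ∀ s ∈ Icc 1 t, h s = h' s) :
    c.timer h t = c.timer h' t := by
  induction t with
  | zero => rfl
  | succ t ih =>
    rw [timer, timer, ih fun s hs => hh s (Icc_subset_Icc_right t.le_succ hs),
      hh (t + 1) (right_mem_Icc.2 (by omega))]

variable {h} in
lemma onlineType_congr {h' : ℕ → ℕ} {t : ℕ} (hh : ∀ s ∈ Icc 1 t, h s = h' s) :
    c.onlineType h t = c.onlineType h' t := by
  induction t with
  | zero => rfl
  | succ t ih =>
    rw [onlineType, onlineType, c.timer_congr hh,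
      ih fun s hs => hh s (Icc_subset_Icc_right t.le_succ hs),
      hh (t + 1) (right_mem_Icc.2 (by omega))]

variable {h} in
lemma timer_mono {h' : ℕ → ℕ} (hh : h ≤ h') (t : ℕ) : c.timer h t ≤ c.timer h' t := by
  induction t with
  | zero => exact le_rfl
  | succ t ih => exact max_le_max (Nat.sub_le_sub_right ih 1) (c.runTime_mono (hh (t + 1)))

lemma timer_pos_of_one_le {t : ℕ} (hh : 1 ≤ h (t + 1)) : 0 < c.timer h (t + 1) :=
  (c.runTime_pos hh).trans_le (le_max_right _ _)

lemma onlineType_succ_of_timer_pos {t : ℕ} (ht : 0 < c.timer h (t + 1)) :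
    c.onlineType h (t + 1) = max (c.onlineType h t) (h (t + 1)) :=
  if_neg ht.ne'

lemma le_onlineType_succ (t : ℕ) : h (t + 1) ≤ c.onlineType h (t + 1) := by
  rcases Nat.eq_zero_or_pos (h (t + 1)) with hh | hh
  · exact hh.le.trans (Nat.zero_le _)
  · rw [c.onlineType_succ_of_timer_pos h (c.timer_pos_of_one_le h hh)]
    exact le_max_right _ _

lemma typeTimer_le_runTime (i t : ℕ) : c.typeTimer h i t ≤ c.runTime i := by
  induction t with
  | zero => exact Nat.zero_le _
  | succ t ih =>
    rw [typeTimer]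
    split_ifs
    exacts [le_rfl, (Nat.sub_le _ _).trans ih]

lemma typeTimer_le_timer (i t : ℕ) : c.typeTimer h i t ≤ c.timer h t := by
  induction t with
  | zero => exact le_rfl
  | succ t ih =>
    rw [typeTimer, timer]
    split_ifs with hh
    exacts [hh ▸ le_max_right _ _, le_max_of_le_left (Nat.sub_le_sub_right ih 1)]

lemma le_onlineType_of_typeTimer_pos {i t : ℕ} (ht : 0 < c.typeTimer h i t) :
    i ≤ c.onlineType h t := by
  induction t with
  | zero => exact absurd ht (lt_irrefl 0)
  | succ t ih =>
    rw [c.onlineType_succ_of_timer_pos h (ht.trans_le (c.typeTimer_le_timer h i (t + 1)))]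
    by_cases hh : h (t + 1) = i
    · exact hh ▸ le_max_right _ _
    · rw [typeTimer, if_neg hh] at ht
      exact le_max_of_le_left (ih (by omega))

variable {h} in
lemma exists_timer_le_typeTimer {d t : ℕ} (hd : ∀ s, h s ≤ d) (ht : 0 < c.timer h t) :
    ∃ i ∈ Icc 1 d, c.timer h t ≤ c.typeTimer h i t := by
  induction t with
  | zero => exact absurd ht (lt_irrefl 0)
  | succ t ih =>
    rcases le_or_gt (c.timer h t - 1) (c.runTime (h (t + 1))) with hle | hlt
    · have htimer : c.timer h (t + 1) = c.runTime (h (t + 1)) := max_eq_right hle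
      have hpos : h (t + 1) ≠ 0 := fun h0 => by
        rw [htimer, h0, c.runTime_zero] at ht
        exact lt_irrefl 0 ht
      refine ⟨h (t + 1), mem_Icc.2 ⟨by omega, hd _⟩, ?_⟩
      rw [htimer, typeTimer, if_pos rfl]
    · obtain ⟨i, hi, hle⟩ := ih (by omega)
      have hne : h (t + 1) ≠ i := fun heq => by
        have := c.typeTimer_le_runTime h i t
        rw [heq] at hlt
        omega
      refine ⟨i, hi, ?_⟩
      rw [timer, typeTimer, if_neg hne, max_eq_left hlt.le]
      omega

/-- Cost of a slot in which a lane changes from type `i` to type `j`, a change being charged the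
full power-up cost. -/
noncomputable def fullStep (i j : ℕ) : ℝ := c.run j + if j = i then 0 else c.power j

/-- Share of the offline cost that the analysis attributes to a request of type `i` in slot
`t + 1`: the running cost, and the cost of keeping the last server of type `i` active since it was
last requested or of powering it up again, whichever is cheaper. -/
noncomputable def charge (i t : ℕ) : ℝ :=
  if h (t + 1) = i then
    c.run i + min (c.power i) (((c.runTime i : ℝ) - c.typeTimer h i t) * c.run i)
  else 0

/-- Prepaid running costs of the lane in the slots after `t`, due to the requests of type `i`. -/
noncomputable def credit (i t : ℕ) : ℝ := c.run i * ((c.typeTimer h i t - 1 : ℕ) : ℝ)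

/-- Twice the charge in slot `t + 1`, minus the increase of the credit. -/
noncomputable def netCharge (i t : ℕ) : ℝ :=
  2 * c.charge h i t + (c.credit h i t - c.credit h i (t + 1))

lemma credit_zero (i : ℕ) : c.credit h i 0 = 0 := by
  simp only [credit, typeTimer, Nat.zero_sub, Nat.cast_zero, mul_zero]

lemma credit_nonneg (i t : ℕ) : 0 ≤ c.credit h i t :=
  mul_nonneg (c.run_nonneg i) (Nat.cast_nonneg _)

variable {h} in
lemma netCharge_of_ne {i t : ℕ} (hh : h (t + 1) ≠ i) :
    c.netCharge h i t = if 1 < c.typeTimer h i t then c.run i else 0 := by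
  simp only [netCharge, charge, credit, typeTimer, if_neg hh]
  split_ifs with hr
  · obtain ⟨r, hr⟩ := Nat.exists_eq_add_of_lt hr
    rw [hr, show 1 + r + 1 - 1 = r + 1 by omega, Nat.add_sub_cancel]
    push_cast
    ring
  · rw [show c.typeTimer h i t - 1 = 0 by omega]
    ring

variable {h} in
lemma le_netCharge_of_eq {i t : ℕ} (hi : 1 ≤ i) (hh : h (t + 1) = i) :
    c.run i + (if c.typeTimer h i t = 0 then c.power i else 0) ≤ c.netCharge h i t := by
  have hrun := c.run_nonneg i
  have hpower := c.runTime_sub_one_mul_le hi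
  have hpower' := c.power_le_runTime_mul hi
  have hcredit : c.credit h i (t + 1) = c.run i * ((c.runTime i : ℝ) - 1) := by
    rw [credit, typeTimer, if_pos hh, Nat.cast_pred (c.runTime_pos hi)]
  rw [netCharge, charge, if_pos hh, hcredit]
  split_ifs with hr
  · rw [credit, hr, Nat.zero_sub, Nat.cast_zero, mul_zero, sub_zero, min_eq_left hpower']
    linarith
  · have hr1 : (1 : ℝ) ≤ c.typeTimer h i t := Nat.one_le_cast.2 (Nat.one_le_iff_ne_zero.2 hr)
    have hle : (c.typeTimer h i t : ℝ) ≤ c.runTime i :=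
      Nat.cast_le.2 (c.typeTimer_le_runTime h i t)
    rw [credit, Nat.cast_pred (Nat.pos_of_ne_zero hr), min_eq_right (by nlinarith)]
    nlinarith

lemma netCharge_nonneg {i : ℕ} (hi : 1 ≤ i) (t : ℕ) : 0 ≤ c.netCharge h i t := by
  by_cases hh : h (t + 1) = i
  · refine le_trans (add_nonneg (c.run_nonneg i) ?_) (c.le_netCharge_of_eq hi hh)
    split_ifs
    exacts [c.power_nonneg i, le_rfl]
  · rw [c.netCharge_of_ne hh]
    split_ifs
    exacts [c.run_nonneg i, le_rfl]

/-- The type with the longest timer pays for a slot without request. -/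
lemma exists_fullStep_le_of_eq_zero {d t : ℕ} (hd : ∀ s, h s ≤ d) (hh : h (t + 1) = 0)
    (ht : 0 < c.timer h (t + 1)) :
    ∃ i ∈ Icc 1 d, c.fullStep (c.onlineType h t) (c.onlineType h (t + 1)) ≤ c.netCharge h i t := by
  obtain ⟨i, hi, hle⟩ := c.exists_timer_le_typeTimer hd ht
  have hi1 := (mem_Icc.1 hi).1
  have hne : h (t + 1) ≠ i := by omega
  rw [typeTimer, if_neg hne] at hle
  refine ⟨i, hi, ?_⟩
  rw [c.onlineType_succ_of_timer_pos h ht, hh, max_eq_left (Nat.zero_le _), fullStep, if_pos rfl,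
    add_zero, c.netCharge_of_ne hne, if_pos (by omega)]
  exact c.run_anti i _ hi1 (c.le_onlineType_of_typeTimer_pos h (by omega))

lemma fullStep_le_netCharge {t : ℕ} (hh : 1 ≤ h (t + 1)) :
    c.fullStep (c.onlineType h t) (c.onlineType h (t + 1)) ≤ c.netCharge h (h (t + 1)) t := by
  have hmax := c.onlineType_succ_of_timer_pos h (c.timer_pos_of_one_le h hh)
  refine (add_le_add (c.run_anti _ _ hh (c.le_onlineType_succ h t)) ?_).trans
    (c.le_netCharge_of_eq hh rfl)
  by_cases hr : c.typeTimer h (h (t + 1)) t = 0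
  · rw [if_pos hr]
    split_ifs with hz
    · exact c.power_nonneg _
    · exact c.power_mono (by omega)
  · have hle := c.le_onlineType_of_typeTimer_pos h (Nat.pos_of_ne_zero hr)
    rw [if_neg hr, hmax, max_eq_left hle, if_pos rfl]

variable {h} in
lemma fullStep_onlineType_le {d : ℕ} (hd : ∀ s, h s ≤ d) (t : ℕ) :
    c.fullStep (c.onlineType h t) (c.onlineType h (t + 1)) ≤
      ∑ i ∈ Icc 1 d, c.netCharge h i t := by
  have hnonneg : ∀ i ∈ Icc 1 d, 0 ≤ c.netCharge h i t := fun i hi =>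
    c.netCharge_nonneg h (mem_Icc.1 hi).1 t
  rcases Nat.eq_zero_or_pos (h (t + 1)) with hh | hh
  · rcases Nat.eq_zero_or_pos (c.timer h (t + 1)) with ht | ht
    · rw [onlineType, if_pos ht, fullStep, c.run_zero, c.power_zero, ite_self, add_zero]
      exact sum_nonneg hnonneg
    · obtain ⟨i, hi, hle⟩ := c.exists_fullStep_le_of_eq_zero h hd hh ht
      exact hle.trans (single_le_sum hnonneg hi)
  · exact (c.fullStep_le_netCharge h hh).trans
      (single_le_sum hnonneg (mem_Icc.2 ⟨hh, hd (t + 1)⟩))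

variable {h} in
theorem sum_fullStep_onlineType_le {d : ℕ} (hd : ∀ s, h s ≤ d) (T : ℕ) :
    ∑ t ∈ range T, c.fullStep (c.onlineType h t) (c.onlineType h (t + 1)) ≤
      2 * ∑ i ∈ Icc 1 d, ∑ t ∈ range T, c.charge h i t := by
  have htelescope : ∀ i, ∑ t ∈ range T, c.netCharge h i t ≤ 2 * ∑ t ∈ range T, c.charge h i t := by
    intro i
    simp only [netCharge, sum_add_distrib, ← mul_sum]
    rw [sum_range_sub' (c.credit h i), c.credit_zero]
    linarith [c.credit_nonneg h i T]
  calc ∑ t ∈ range T, c.fullStep (c.onlineType h t) (c.onlineType h (t + 1))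
      ≤ ∑ t ∈ range T, ∑ i ∈ Icc 1 d, c.netCharge h i t :=
        sum_le_sum fun t _ => c.fullStep_onlineType_le hd t
    _ = ∑ i ∈ Icc 1 d, ∑ t ∈ range T, c.netCharge h i t := sum_comm
    _ ≤ 2 * ∑ i ∈ Icc 1 d, ∑ t ∈ range T, c.charge h i t := by
        rw [mul_sum]
        exact sum_le_sum fun i _ => htelescope i

end LaneCosts

/-! ### Charging the optimal schedules -/

/-- The last time `s ≤ t` at which `h` is at least `i`, or `0` if there is none. -/
def lastReach (h : ℕ → ℕ) (i t : ℕ) : ℕ := Nat.findGreatest (fun s => i ≤ h s) t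

lemma lastReach_succ (h : ℕ → ℕ) (i t : ℕ) :
    lastReach h i (t + 1) = if i ≤ h (t + 1) then t + 1 else lastReach h i t :=
  Nat.findGreatest_succ t

lemma lastReach_le (h : ℕ → ℕ) (i t : ℕ) : lastReach h i t ≤ t := Nat.findGreatest_le t

lemma lastReach_mono (h : ℕ → ℕ) (i : ℕ) : Monotone (lastReach h i) := fun _ _ hst =>
  Nat.findGreatest_mono_right _ hst

lemma lastReach_mono_left {h h' : ℕ → ℕ} (hh : h ≤ h') (i t : ℕ) :
    lastReach h i t ≤ lastReach h' i t :=
  Nat.findGreatest_mono_left (fun s hs => hs.trans (hh s)) t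

lemma le_apply_lastReach {h : ℕ → ℕ} {i t : ℕ} (ht : lastReach h i t ≠ 0) :
    i ≤ h (lastReach h i t) :=
  Nat.findGreatest_of_ne_zero (P := fun s => i ≤ h s) rfl ht

namespace LaneCosts

variable (c : LaneCosts)

lemma runTime_le_typeTimer_add {h : ℕ → ℕ} {i s t : ℕ} (hs : s ≠ 0) (hst : s ≤ t) (hh : h s = i) :
    c.runTime i ≤ c.typeTimer h i t + (t - s) := by
  induction t, hst using Nat.le_induction with
  | base =>
    obtain ⟨r, rfl⟩ := Nat.exists_eq_succ_of_ne_zero hs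
    rw [Nat.succ_eq_add_one, typeTimer, if_pos hh]
    exact Nat.le_add_right _ _
  | succ t hst ih =>
    rw [typeTimer]
    split_ifs <;> omega

/-- Since the last time `s` at which type `i` was reached, either the path was idle at some point,
and pays for powering up, or it used types at most `i` all the time, and then `h s = i`, so it pays
for keeping a server running since the last request. -/
lemma charge_le_pathCost {h y : ℕ → ℕ} {i u : ℕ} (hy0 : y 0 = 0)
    (hup : ∀ t, 1 ≤ y (t + 1) → y t ≤ y (t + 1)) (hhy : ∀ t ∈ Icc 1 u, h t ≤ y t)
    (hi : 1 ≤ i) (hyu : y (u + 1) = i) :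
    c.run i + min (c.power i) (((c.runTime i : ℝ) - c.typeTimer h i u) * c.run i) ≤
      c.pathCost y (lastReach h i u) (u + 1) := by
  set s := lastReach h i u
  have hsu : s ≤ u := lastReach_le h i u
  by_cases hidle : ∃ r, s ≤ r ∧ r ≤ u ∧ y r = 0
  · obtain ⟨r, hsr, hru, hr⟩ := hidle
    have hpath := c.power_sub_add_run_le_pathCost y (Nat.lt_succ_of_le hru)
    rw [Nat.succ_eq_add_one, hyu, hr, c.power_zero] at hpath
    linarith [min_le_left (c.power i) (((c.runTime i : ℝ) - c.typeTimer h i u) * c.run i),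
      c.pathCost_le_pathCost y hsr (hru.trans u.le_succ)]
  push Not at hidle
  have hactive : ∀ r ∈ Set.Icc s (u + 1), 1 ≤ y r := fun r hr => by
    rcases hr.2.lt_or_eq with hru | rfl
    · exact Nat.one_le_iff_ne_zero.2 (hidle r hr.1 (Nat.lt_succ_iff.1 hru))
    · exact hi.trans hyu.ge
  have hmono : MonotoneOn y (Set.Icc s (u + 1)) :=
    monotoneOn_of_le_add_one Set.ordConnected_Icc fun r _ _ hr => hup r (hactive _ hr)
  have hyi : ∀ r ∈ Set.Icc s (u + 1), y r ≤ i := fun r hr =>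
    (hmono hr ⟨hsu.trans u.le_succ, le_rfl⟩ hr.2).trans hyu.le
  have hsmem : s ∈ Set.Icc s (u + 1) := ⟨le_rfl, hsu.trans u.le_succ⟩
  have hs0 : s ≠ 0 := fun h0 => (hactive s hsmem).not_gt (by rw [h0, hy0]; exact one_pos)
  have hhs : h s = i :=
    ((hhy s (mem_Icc.2 ⟨Nat.one_le_iff_ne_zero.2 hs0, hsu⟩)).trans (hyi s hsmem)).antisymm
      (le_apply_lastReach hs0)
  have htimer : (c.runTime i : ℝ) - c.typeTimer h i u ≤ u - s := by
    rw [sub_le_iff_le_add', ← Nat.cast_sub hsu]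
    exact_mod_cast c.runTime_le_typeTimer_add hs0 hsu hhs
  calc c.run i + min (c.power i) (((c.runTime i : ℝ) - c.typeTimer h i u) * c.run i)
      ≤ c.run i + ((u : ℝ) - s) * c.run i :=
        add_le_add_right ((min_le_right _ _).trans
          (mul_le_mul_of_nonneg_right htimer (c.run_nonneg i))) _
    _ = (((u + 1 : ℕ) : ℝ) - s) * c.run i := by
        push_cast
        ring
    _ ≤ c.pathCost y s (u + 1) := c.mul_run_le_pathCost hsmem.2 fun r hsr hru =>
        ⟨hactive r ⟨hsr.le, hru⟩, hyi r ⟨hsr.le, hru⟩⟩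

lemma charge_le_pathCost_lastReach {h y : ℕ → ℕ} {i u : ℕ} (hy0 : y 0 = 0)
    (hup : ∀ t, 1 ≤ y (t + 1) → y t ≤ y (t + 1)) (hhy : ∀ t ∈ Icc 1 u, h t ≤ y t)
    (hi : 1 ≤ i) (hyu : y (u + 1) = h (u + 1)) :
    c.charge h i u ≤ c.pathCost y (lastReach h i u) (lastReach h i (u + 1)) := by
  rw [charge]
  split_ifs with hh
  · rw [lastReach_succ, if_pos hh.ge]
    exact c.charge_le_pathCost hy0 hup hhy hi (hyu.trans hh)
  · exact c.pathCost_nonneg _ _ _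

end LaneCosts

section BestFamily

variable {c : LaneCosts} {d N : ℕ} {m lam : ℕ → ℕ} {b : ℕ → ℕ → ℕ → ℕ}

lemma monotone_of_isBest (hb : ∀ u, IsBest c d N m lam u (b u)) : Monotone b :=
  monotone_nat_of_le_succ fun u => (hb u).le_of_succ (hb (u + 1))

lemma sum_charge_le_sum_pathCost (hb : ∀ u, IsBest c d N m lam u (b u)) {i : ℕ} (hi : 1 ≤ i)
    (u : ℕ) :
    ∑ k ∈ range N, ∑ t ∈ range u, c.charge (fun t => b t t k) i t ≤
      ∑ k ∈ range N, c.pathCost (b u · k) 0 (lastReach (fun t => b t t k) i u) := by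
  induction u with
  | zero =>
    exact sum_le_sum fun k _ => (sum_range_zero _).trans_le (c.pathCost_nonneg _ _ _)
  | succ u ih =>
    have hnext := (hb (u + 1)).isLaneSchedule
    have hanti : Antitone fun k => lastReach (fun t => b t t k) i u := fun k k' hk =>
      lastReach_mono_left (fun t => ((hb t).isLaneSchedule.state t).anti hk) i u
    have hexchange := (hb u).prop.sum_pathCost_le hnext.state hnext.start
      (monotone_of_isBest hb u.le_succ) hanti fun k => lastReach_le _ i u
    have hcharge : ∀ k, c.charge (fun t => b t t k) i u ≤
        c.pathCost (b (u + 1) · k) (lastReach (fun t => b t t k) i u)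
          (lastReach (fun t => b t t k) i (u + 1)) := fun k =>
      c.charge_le_pathCost_lastReach (congrFun hnext.start k)
        (fun t ht => (hb (u + 1)).le_succ_of_one_le ht)
        (fun t ht => monotone_of_isBest hb ((mem_Icc.1 ht).2.trans u.le_succ) t k) hi rfl
    simp only [sum_range_succ, sum_add_distrib,
      ← fun k => c.pathCost_add (b (u + 1) · k) (Nat.zero_le (lastReach (fun t => b t t k) i u))
        (lastReach_mono (fun t => b t t k) i u.le_succ)]
    exact add_le_add (ih.trans hexchange) (sum_le_sum fun k _ => hcharge k)

theorem sum_fullStep_onlineType_le_totalCost (hb : ∀ u, IsBest c d N m lam u (b u)) (T : ℕ) :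
    ∑ k ∈ range N, ∑ t ∈ range T, c.fullStep (c.onlineType (fun t => b t t k) t)
        (c.onlineType (fun t => b t t k) (t + 1)) ≤
      2 * d * c.totalCost N T (b T) := by
  have hcharge : ∀ i ∈ Icc 1 d,
      ∑ k ∈ range N, ∑ t ∈ range T, c.charge (fun t => b t t k) i t ≤ c.totalCost N T (b T) := by
    intro i hi
    refine (sum_charge_le_sum_pathCost hb (mem_Icc.1 hi).1 T).trans (sum_le_sum fun k _ => ?_)
    rw [← c.pathCost_add _ (Nat.zero_le _) (lastReach_le (fun t => b t t k) i T)]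
    exact le_add_of_nonneg_right (c.pathCost_nonneg _ _ _)
  calc _ ≤ ∑ k ∈ range N, 2 * ∑ i ∈ Icc 1 d, ∑ t ∈ range T, c.charge (fun t => b t t k) i t :=
        sum_le_sum fun k _ => c.sum_fullStep_onlineType_le
          (fun t => ((hb t).isLaneSchedule.state t).le k) T
    _ = 2 * ∑ i ∈ Icc 1 d, ∑ k ∈ range N, ∑ t ∈ range T, c.charge (fun t => b t t k) i t := by
        rw [← mul_sum, sum_comm]
    _ ≤ 2 * ∑ _i ∈ Icc 1 d, c.totalCost N T (b T) :=
        mul_le_mul_of_nonneg_left (sum_le_sum hcharge) zero_le_two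
    _ = 2 * d * c.totalCost N T (b T) := by
        rw [sum_const, Nat.card_Icc, Nat.add_sub_cancel, nsmul_eq_mul, mul_assoc]

end BestFamily

/-! ### From schedules to lane schedules -/

/-- The lanes of a schedule, numbered from `0` instead of `1`. -/
noncomputable def laneState (d : ℕ) (x : ℕ → ℕ → ℕ) (t k : ℕ) : ℕ := lane d x t (k + 1)

lemma laneState_le (d : ℕ) (x : ℕ → ℕ → ℕ) (t k : ℕ) : laneState d x t k ≤ d :=
  csSup_le' fun _ hj => (mem_Icc.1 hj.1).2

lemma le_laneState_iff {d j : ℕ} (hj : j ∈ Icc 1 d) (x : ℕ → ℕ → ℕ) (t k : ℕ) :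
    j ≤ laneState d x t k ↔ k < ∑ i ∈ Icc j d, x t i := by
  have hbdd : BddAbove {j | j ∈ Icc 1 d ∧ k + 1 ≤ ∑ i ∈ Icc j d, x t i} :=
    ⟨d, fun _ hi => (mem_Icc.1 hi.1).2⟩
  refine ⟨fun hle => ?_, fun hk => le_csSup hbdd ⟨hj, hk⟩⟩
  have hpos : 0 < laneState d x t k := (mem_Icc.1 hj).1.trans hle
  have hmem : laneState d x t k ∈ {j | j ∈ Icc 1 d ∧ k + 1 ≤ ∑ i ∈ Icc j d, x t i} :=
    Nat.sSup_mem (Set.nonempty_iff_ne_empty.2 fun hempty => by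
      rw [laneState, lane, hempty, csSup_empty] at hpos
      exact lt_irrefl 0 hpos) hbdd
  exact hmem.2.trans (sum_le_sum_of_subset (Icc_subset_Icc_left hle))

lemma isLaneState_laneState (d : ℕ) (x : ℕ → ℕ → ℕ) (t : ℕ) :
    IsLaneState d (∑ j ∈ Icc 1 d, x t j) (x t) (laneState d x t) where
  le := laneState_le d x t
  anti k k' hk := by
    rcases Nat.eq_zero_or_pos (laneState d x t k') with h0 | hpos
    · exact h0.le.trans (Nat.zero_le _)
    · have hmem := mem_Icc.2 ⟨hpos, laneState_le d x t k'⟩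
      exact (le_laneState_iff hmem x t k).2
        (hk.trans_lt ((le_laneState_iff hmem x t k').1 le_rfl))
  capacity j hj hjd k hk := by
    have hlt := (le_laneState_iff (mem_Icc.2 ⟨hj, hjd⟩) x t _).1 hk
    rw [← insert_Icc_add_one_left_eq_Icc hjd, sum_insert (by simp)] at hlt
    have hk' : k < ∑ i ∈ Icc (j + 1) d, x t i := by omega
    have hjd' : j + 1 ≤ d := by
      by_contra! hgt
      rw [Icc_eq_empty (by omega), sum_empty] at hk'
      omega
    exact (le_laneState_iff (mem_Icc.2 ⟨by omega, hjd'⟩) x t k).2 hk'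
  idle k hk := by
    by_contra hne
    have hd : 1 ≤ d := (Nat.one_le_iff_ne_zero.2 hne).trans (laneState_le d x t k)
    exact hk.not_gt ((le_laneState_iff (left_mem_Icc.2 hd) x t k).1 (Nat.one_le_iff_ne_zero.2 hne))

lemma laneState_eq_zero {x : ℕ → ℕ → ℕ} {t : ℕ} (hx : ∀ j, x t j = 0) (d : ℕ) :
    laneState d x t = 0 :=
  funext fun k => (isLaneState_laneState d x t).idle k
    (by rw [sum_eq_zero fun j _ => hx j]; exact Nat.zero_le k)

lemma Feasible.isLaneSchedule {T d : ℕ} {m lam : ℕ → ℕ} {x : ℕ → ℕ → ℕ}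
    (hx : Feasible T d m lam x) :
    IsLaneSchedule d (∑ j ∈ Icc 1 d, m j) m lam T (laneState d x) := by
  obtain ⟨hstart, hfinish, hslot⟩ := hx
  have hcap : ∀ t, x t ≤ m := fun t j => by
    rcases Nat.eq_zero_or_pos t with rfl | ht
    · exact (hstart j).le.trans (Nat.zero_le _)
    · rcases le_or_gt t T with htT | htT
      · exact (hslot t (mem_Icc.2 ⟨ht, htT⟩)).2 j
      · exact (hfinish t htT j).le.trans (Nat.zero_le _)
  refine ⟨fun t => (isLaneState_laneState d x t).mono (sum_le_sum fun j _ => hcap t j) (hcap t),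
    laneState_eq_zero hstart d, fun t ht => laneState_eq_zero (hfinish t ht) d,
    fun t ht k hk _ => ?_⟩
  have hlt : k < ∑ j ∈ Icc 1 d, x t j := hk.trans_le (hslot t ht).1
  have hd : 1 ≤ d := by
    by_contra! hd
    rw [Icc_eq_empty (by omega), sum_empty] at hlt
    omega
  exact (le_laneState_iff (left_mem_Icc.2 hd) x t k).2 hlt

lemma exists_isLaneSchedule (d : ℕ) (m lam : ℕ → ℕ) (u : ℕ) :
    ∃ y, IsLaneSchedule d (∑ j ∈ Icc 1 d, m j) m lam u y := by
  have hall : Feasible u d m (fun t => min (lam t) (∑ j ∈ Icc 1 d, m j))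
      fun t j => if t ∈ Icc 1 u then m j else 0 :=
    ⟨fun j => if_neg (by simp), fun t ht j => if_neg (by simp; omega), fun t ht => by
      simp only [ht, if_true, le_refl, min_le_right, implies_true, and_self]⟩
  have hsched := hall.isLaneSchedule
  exact ⟨_, hsched.state, hsched.start, hsched.finish, fun t ht k hk hkN =>
    hsched.demand t ht k (lt_min hk hkN) hkN⟩

lemma sum_mul_card_fiber {d : ℕ} {z : ℕ → ℕ} (hz : ∀ k, z k ≤ d) {f : ℕ → ℝ} (hf : f 0 = 0)
    (s : Finset ℕ) :
    ∑ j ∈ Icc 1 d, f j * (#{k ∈ s | z k = j} : ℝ) = ∑ k ∈ s, f (z k) := by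
  rw [← sum_fiberwise_of_maps_to' (t := range (d + 1))
    (fun k _ => mem_range.2 (Nat.lt_succ_of_le (hz k))) f]
  simp only [sum_const, nsmul_eq_mul, mul_comm (f _)]
  refine sum_subset (fun j hj => by simp at hj ⊢; omega) fun j hj hj0 => ?_
  have h0 : j = 0 := by simp at hj hj0; omega
  rw [h0, hf, mul_zero]

lemma sum_sub_mul_sum_Icc {f : ℕ → ℝ} (hf : f 0 = 0) (d : ℕ) (x : ℕ → ℝ) :
    ∑ j ∈ range d, (f (j + 1) - f j) * ∑ i ∈ Icc (j + 1) d, x i = ∑ i ∈ Icc 1 d, f i * x i := by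
  simp only [mul_sum]
  rw [sum_comm' (t' := Icc 1 d) (s' := range) fun j i => by
    simp only [mem_range, mem_Icc]
    omega]
  refine sum_congr rfl fun i _ => ?_
  rw [← sum_mul, sum_range_sub, hf, sub_zero]

lemma card_upgrades_le (d : ℕ) (x : ℕ → ℕ → ℕ) (s t N : ℕ) {j : ℕ} (hj : j < d) :
    #{k ∈ range N | laneState d x s k ≤ j ∧ j < laneState d x t k} ≤
      ∑ i ∈ Icc (j + 1) d, (x t i - x s i) := by
  have hmem : j + 1 ∈ Icc 1 d := mem_Icc.2 ⟨by omega, hj⟩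
  have hsub : ({k ∈ range N | laneState d x s k ≤ j ∧ j < laneState d x t k} : Finset ℕ) ⊆
      Ico (∑ i ∈ Icc (j + 1) d, x s i) (∑ i ∈ Icc (j + 1) d, x t i) := fun k hk => by
    obtain ⟨-, hs, ht⟩ := mem_filter.1 hk
    exact mem_Ico.2 ⟨not_lt.1 fun hlt => hs.not_gt ((le_laneState_iff hmem x s k).2 hlt),
      (le_laneState_iff hmem x t k).1 ht⟩
  refine (card_le_card hsub).trans ?_
  rw [Nat.card_Ico, Nat.sub_le_iff_le_add, ← sum_add_distrib]
  exact sum_le_sum fun i _ => le_tsub_add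

lemma sum_max_sub_laneState_le {f : ℕ → ℝ} (hf : Monotone f) (hf0 : f 0 = 0) (d : ℕ)
    (x : ℕ → ℕ → ℕ) (s t N : ℕ) :
    ∑ k ∈ range N, max 0 (f (laneState d x t k) - f (laneState d x s k)) ≤
      ∑ j ∈ Icc 1 d, f j * ((x t j - x s j : ℕ) : ℝ) := by
  have hlayers : ∀ i j, max 0 (f j - f i) = ∑ r ∈ Ico i j, (f (r + 1) - f r) := by
    intro i j
    rcases le_total i j with hij | hij
    · rw [max_eq_right (sub_nonneg.2 (hf hij)), sum_Ico_sub _ hij]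
    · rw [max_eq_left (sub_nonpos.2 (hf hij)), Ico_eq_empty hij.not_gt, sum_empty]
  simp only [hlayers]
  rw [sum_comm' (t' := range d)
      (s' := fun j => {k ∈ range N | laneState d x s k ≤ j ∧ j < laneState d x t k}) fun k j => by
    have := laneState_le d x t k
    simp only [mem_range, mem_Ico, mem_filter]
    omega, ← sum_sub_mul_sum_Icc hf0]
  refine sum_le_sum fun j hj => ?_
  rw [sum_const, nsmul_eq_mul, mul_comm]
  refine mul_le_mul_of_nonneg_left ?_ (sub_nonneg.2 (hf j.le_succ))
  exact_mod_cast card_upgrades_le d x s t N (mem_range.1 hj)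

lemma cost_eq_sum_range (T d : ℕ) (β l : ℕ → ℝ) (x : ℕ → ℕ → ℕ) :
    cost T d β l x = ∑ t ∈ range T, ∑ j ∈ Icc 1 d,
      (l j * (x (t + 1) j : ℝ) + β j * ((x (t + 1) j - x t j : ℕ) : ℝ)) := by
  rw [cost, range_eq_Ico, ← Ico_add_one_right_eq_Icc, ← sum_Ico_add' _ 0 T 1]
  rfl

lemma LaneCosts.totalCost_laneState_le (c : LaneCosts) (N T d : ℕ) (x : ℕ → ℕ → ℕ) :
    c.totalCost N T (laneState d x) ≤ cost T d c.power c.run x := by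
  simp only [totalCost, pathCost, ← range_eq_Ico]
  rw [sum_comm, cost_eq_sum_range]
  refine sum_le_sum fun t _ => ?_
  simp only [step, sum_add_distrib]
  refine add_le_add ?_ (sum_max_sub_laneState_le c.power_mono c.power_zero d x t (t + 1) N)
  rw [← sum_mul_card_fiber (laneState_le d x (t + 1)) c.run_zero]
  exact sum_le_sum fun j hj => mul_le_mul_of_nonneg_left
    (Nat.cast_le.2 ((isLaneState_laneState d x (t + 1)).card_le hj _)) (c.run_nonneg j)

/-! ### The online algorithm -/

namespace LaneCosts

variable (c : LaneCosts) (d : ℕ) (m lam : ℕ → ℕ)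

/-- The schedule `X̂^u` which the online algorithm computes at time `u`. Being chosen from the
predicate alone, it depends only on the job volumes up to time `u`. -/
noncomputable def bestSchedule (u : ℕ) : ℕ → ℕ → ℕ :=
  Classical.epsilon (IsBest c d (∑ j ∈ Icc 1 d, m j) m lam u)

lemma isBest_bestSchedule (u : ℕ) :
    IsBest c d (∑ j ∈ Icc 1 d, m j) m lam u (c.bestSchedule d m lam u) :=
  Classical.epsilon_spec (exists_isBest c (exists_isLaneSchedule d m lam u))

variable {lam} in
lemma bestSchedule_congr {lam' : ℕ → ℕ} {u : ℕ} (h : ∀ t ∈ Icc 1 u, lam t = lam' t) :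
    c.bestSchedule d m lam u = c.bestSchedule d m lam' u :=
  congrArg Classical.epsilon (funext fun _ => propext (isBest_congr h))

/-- The server type which the online algorithm runs in lane `k` at time `t`. -/
noncomputable def onlineLane (t k : ℕ) : ℕ :=
  c.onlineType (fun s => c.bestSchedule d m lam s s k) t

variable {lam} in
lemma onlineLane_congr {lam' : ℕ → ℕ} {t : ℕ} (h : ∀ s ∈ Icc 1 t, lam s = lam' s) :
    c.onlineLane d m lam t = c.onlineLane d m lam' t :=
  funext fun k => c.onlineType_congr fun s hs => by
    rw [c.bestSchedule_congr d m fun r hr =>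
      h r (Icc_subset_Icc_right (mem_Icc.1 hs).2 hr)]

lemma isLaneState_onlineLane (t : ℕ) :
    IsLaneState d (∑ j ∈ Icc 1 d, m j) m (c.onlineLane d m lam t) := by
  have hbest : ∀ u, IsLaneState d (∑ j ∈ Icc 1 d, m j) m (c.bestSchedule d m lam u u) := fun u =>
    (c.isBest_bestSchedule d m lam u).isLaneSchedule.state u
  induction t with
  | zero =>
    have hzero : c.onlineLane d m lam 0 = (∅ : Set ℕ).indicator (c.bestSchedule d m lam 0 0) :=
      (Set.indicator_empty _).symm
    exact hzero ▸ (hbest 0).indicator isLowerSet_empty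
  | succ t ih =>
    set active := {k | 0 < c.timer (fun s => c.bestSchedule d m lam s s k) (t + 1)}
    have hactive : IsLowerSet active := fun k k' hk hpos =>
      hpos.trans_le (c.timer_mono (fun s => (hbest s).anti hk) (t + 1))
    have hsucc : c.onlineLane d m lam (t + 1) =
        active.indicator (c.onlineLane d m lam t ⊔ c.bestSchedule d m lam (t + 1) (t + 1)) := by
      funext k
      by_cases hk : k ∈ active
      · rw [Set.indicator_of_mem hk]
        exact c.onlineType_succ_of_timer_pos _ hk
      · rw [Set.indicator_of_notMem hk]
        exact if_pos (Nat.eq_zero_of_not_pos hk)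
    exact hsucc ▸ (ih.sup (hbest (t + 1))).indicator hactive

lemma one_le_onlineLane {t k : ℕ} (hk : k < lam (t + 1)) (hkN : k < ∑ j ∈ Icc 1 d, m j) :
    1 ≤ c.onlineLane d m lam (t + 1) k :=
  ((c.isBest_bestSchedule d m lam (t + 1)).isLaneSchedule.demand (t + 1)
    (right_mem_Icc.2 (by omega)) k hk hkN).trans
    (c.le_onlineType_succ (fun s => c.bestSchedule d m lam s s k) t)

/-- The online algorithm: `q` lists the job volumes seen so far, so that the volume of slot `s` is
its entry `s - 1`. -/
noncomputable def algorithm (q : List ℕ) (j : ℕ) : ℕ :=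
  #{k ∈ range (∑ j ∈ Icc 1 d, m j) |
    c.onlineLane d m (fun s => q.getD (s - 1) 0) q.length k = j}

lemma onlineSched_algorithm {T t j : ℕ} (htT : t ≤ T) (hj : j ∈ Icc 1 d) :
    onlineSched (c.algorithm d m) T d lam t j =
      #{k ∈ range (∑ j ∈ Icc 1 d, m j) | c.onlineLane d m lam t k = j} := by
  obtain ⟨hj1, hjd⟩ := mem_Icc.1 hj
  rcases Nat.eq_zero_or_pos t with rfl | ht
  · rw [onlineSched, if_neg (by omega), eq_comm, card_eq_zero, filter_eq_empty_iff]
    exact fun k _ (h0 : 0 = j) => by omega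
  · have hvolumes : ∀ s ∈ Icc 1 t,
        ((List.range t).map fun i => lam (i + 1)).getD (s - 1) 0 = lam s := fun s hs => by
      obtain ⟨hs1, hst⟩ := mem_Icc.1 hs
      rw [List.getD_eq_getElem _ _ (by simp; omega)]
      simp [Nat.sub_add_cancel hs1]
    rw [onlineSched, if_pos ⟨ht, htT, hj1, hjd⟩, algorithm, List.length_map, List.length_range,
      c.onlineLane_congr d m hvolumes]

theorem feasible_onlineSched_algorithm {T : ℕ}
    (hlam : ∀ t ∈ Icc 1 T, lam t ≤ ∑ j ∈ Icc 1 d, m j) :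
    Feasible T d m lam (onlineSched (c.algorithm d m) T d lam) := by
  refine ⟨fun j => if_neg (by omega), fun t ht j => if_neg (by omega),
    fun t ht => ⟨?_, fun j => ?_⟩⟩
  · have hfiber : ∀ j ∈ Icc 1 d, #{k ∈ range (lam t) | c.onlineLane d m lam t k = j} ≤
        onlineSched (c.algorithm d m) T d lam t j := fun j hj => by
      rw [c.onlineSched_algorithm d m lam (mem_Icc.1 ht).2 hj]
      exact card_le_card (filter_subset_filter _ (range_mono (hlam t ht)))
    have hmaps : ∀ k ∈ range (lam t), c.onlineLane d m lam t k ∈ Icc 1 d := fun k hk => by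
      obtain ⟨s, rfl⟩ := Nat.exists_eq_add_of_le' (mem_Icc.1 ht).1
      have hk := mem_range.1 hk
      exact mem_Icc.2 ⟨c.one_le_onlineLane d m lam hk (hk.trans_le (hlam _ ht)),
        (c.isLaneState_onlineLane d m lam _).le k⟩
    calc lam t = #(range (lam t)) := (card_range _).symm
      _ = ∑ j ∈ Icc 1 d, #{k ∈ range (lam t) | c.onlineLane d m lam t k = j} :=
          card_eq_sum_card_fiberwise hmaps
      _ ≤ _ := sum_le_sum hfiber
  · by_cases hj : j ∈ Icc 1 d
    · rw [c.onlineSched_algorithm d m lam (mem_Icc.1 ht).2 hj]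
      exact (c.isLaneState_onlineLane d m lam t).card_le hj _
    · rw [onlineSched, if_neg fun h => hj (mem_Icc.2 h.2.2)]
      exact Nat.zero_le _

lemma sum_mul_card_fiber_add_le_sum_fullStep {s : Finset ℕ} {y z : ℕ → ℕ} (hz : ∀ k, z k ≤ d) :
    ∑ j ∈ Icc 1 d, (c.run j * (#{k ∈ s | z k = j} : ℝ) +
        c.power j * ((#{k ∈ s | z k = j} - #{k ∈ s | y k = j} : ℕ) : ℝ)) ≤
      ∑ k ∈ s, c.fullStep (y k) (z k) := by
  have hchanged : ∀ j, #{k ∈ s | z k = j} - #{k ∈ s | y k = j} ≤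
      #{k ∈ {k ∈ s | z k ≠ y k} | z k = j} := fun j => by
    refine (le_card_sdiff _ _).trans (card_le_card fun k hk => ?_)
    simp only [mem_sdiff, mem_filter, not_and] at hk ⊢
    exact ⟨⟨hk.1.1, fun hzy => hk.2 hk.1.1 (hzy ▸ hk.1.2)⟩, hk.1.2⟩
  calc _ ≤ ∑ j ∈ Icc 1 d, (c.run j * (#{k ∈ s | z k = j} : ℝ) +
        c.power j * (#{k ∈ {k ∈ s | z k ≠ y k} | z k = j} : ℝ)) :=
        sum_le_sum fun j _ => add_le_add le_rfl
          (mul_le_mul_of_nonneg_left (Nat.cast_le.2 (hchanged j)) (c.power_nonneg j))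
    _ = ∑ k ∈ s, c.fullStep (y k) (z k) := by
        rw [sum_add_distrib, sum_mul_card_fiber hz c.run_zero, sum_mul_card_fiber hz c.power_zero,
          sum_filter, ← sum_add_distrib]
        simp only [fullStep, ite_not]

lemma cost_onlineSched_algorithm_le (T : ℕ) :
    cost T d c.power c.run (onlineSched (c.algorithm d m) T d lam) ≤
      ∑ k ∈ range (∑ j ∈ Icc 1 d, m j), ∑ t ∈ range T,
        c.fullStep (c.onlineLane d m lam t k) (c.onlineLane d m lam (t + 1) k) := by
  rw [cost_eq_sum_range, sum_comm (s := range (∑ j ∈ Icc 1 d, m j))]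
  refine sum_le_sum fun t ht => ?_
  have htT := mem_range.1 ht
  refine (sum_congr rfl fun j hj => ?_).trans_le (c.sum_mul_card_fiber_add_le_sum_fullStep d
    (y := c.onlineLane d m lam t) (c.isLaneState_onlineLane d m lam (t + 1)).le)
  rw [c.onlineSched_algorithm d m lam htT hj, c.onlineSched_algorithm d m lam htT.le hj]

theorem cost_onlineSched_algorithm_le_two_mul {T : ℕ} {x : ℕ → ℕ → ℕ} (hx : Feasible T d m lam x) :
    cost T d c.power c.run (onlineSched (c.algorithm d m) T d lam) ≤
      2 * d * cost T d c.power c.run x :=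
  calc _ ≤ _ := c.cost_onlineSched_algorithm_le d m lam T
    _ ≤ 2 * d * c.totalCost _ T (c.bestSchedule d m lam T) :=
        sum_fullStep_onlineType_le_totalCost (c.isBest_bestSchedule d m lam) T
    _ ≤ 2 * d * cost T d c.power c.run x :=
        mul_le_mul_of_nonneg_left
          (((c.isBest_bestSchedule d m lam T).prop.2 _ hx.isLaneSchedule).trans
            (c.totalCost_laneState_le _ T d x)) (by positivity)

end LaneCosts

lemma cost_congr {T d : ℕ} {β β' l l' : ℕ → ℝ} (h : ∀ j ∈ Icc 1 d, l j = l' j ∧ β j = β' j)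
    (x : ℕ → ℕ → ℕ) : cost T d β l x = cost T d β' l' x :=
  sum_congr rfl fun t _ => sum_congr rfl fun j hj => by rw [(h j hj).1, (h j hj).2]

theorem online_2d_competitive_general {d : ℕ} (hd : 1 ≤ d) (m : ℕ → ℕ) {β l : ℕ → ℝ}
    (hl : AntitoneOn l (Set.Icc 1 d)) (hl0 : 0 < l d)
    (hβ : MonotoneOn β (Set.Icc 1 d)) (hβ0 : 0 ≤ β 1) :
    ∃ A : List ℕ → ℕ → ℕ,
      ∀ (T : ℕ) (lam : ℕ → ℕ),
        (∀ t ∈ Icc 1 T, lam t ≤ ∑ j ∈ Icc 1 d, m j) →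
        Feasible T d m lam (onlineSched A T d lam) ∧
        ∀ x', Feasible T d m lam x' →
          cost T d β l (onlineSched A T d lam) ≤ 2 * d * cost T d β l x' := by
  obtain ⟨c, hc⟩ := exists_laneCosts hd hl hl0 hβ hβ0
  refine ⟨c.algorithm d m, fun T lam hlam =>
    ⟨c.feasible_onlineSched_algorithm d m lam hlam, fun x' hx' => ?_⟩⟩
  simpa only [cost_congr hc] using c.cost_onlineSched_algorithm_le_two_mul d m lam hx'

/-- For `d` heterogeneous server types with sorted costs
(`l 1 > … > l d > 0`, `0 < β 1 < … < β d`, no inefficient types), there is a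
deterministic online algorithm whose schedule is always feasible and whose total cost is
at most `2d` times the cost of any (in particular an optimal) feasible schedule. -/
theorem online_2d_competitive (d : ℕ) (hd : 1 ≤ d) (m : ℕ → ℕ) (β l : ℕ → ℝ)
    (hl : ∀ j j', 1 ≤ j → j < j' → j' ≤ d → l j' < l j)
    (hl0 : ∀ j, 1 ≤ j → j ≤ d → 0 < l j)
    (hβ : ∀ j j', 1 ≤ j → j < j' → j' ≤ d → β j < β j')
    (hβ0 : ∀ j, 1 ≤ j → j ≤ d → 0 < β j) :
    ∃ A : List ℕ → ℕ → ℕ,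
      ∀ (T : ℕ) (lam : ℕ → ℕ),
        (∀ t ∈ Finset.Icc 1 T, lam t ≤ ∑ j ∈ Finset.Icc 1 d, m j) →
        Feasible T d m lam (onlineSched A T d lam) ∧
        ∀ x', Feasible T d m lam x' →
          cost T d β l (onlineSched A T d lam) ≤ 2 * d * cost T d β l x' :=
  online_2d_competitive_general hd m
    (StrictAntiOn.antitoneOn fun j hj j' hj' hlt => hl j j' hj.1 hlt hj'.2) (hl0 d hd le_rfl)
    (StrictMonoOn.monotoneOn fun j hj j' hj' hlt => hβ j j' hj.1 hlt hj'.2) (hβ0 1 le_rfl hd).le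
end
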